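/- Let K > 0 and J ∈ ℝ, and assume φ_{K,J} attains its minimum over [−1,1] at exactly two points m₀ ≠ m₁ in (−1,1), each with φ_{K,J}''(m_i) > 0 (i.e., (K,J) lies on the coexistence curve γ). For i = 0,1, let A_i be an open neighborhood of m_i in (−1,1) whose closure does not contain m_{1−i}, and set W_n^{(i)} = (S_n − n·m_i)/√(n/φ_{K,J}''(m_i)). Then for i = 0,1 there exist constants c_i > 0 and C_i > 0 such that for all n ≥ 1 and all x with 0 ≤ x ≤ c_i·n^{1/6}: | P_{n,K,J}(W_n^{(i)} > x | m_n ∈ A_i) / P(Z > x) − 1 | ≤ C_i·(1 + x³)/√n, where Z is a standard normal random variable and the conditional probability is with respect to P_{n,K,J}. -/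

import Mathlib

/-!
Write `b` for the second derivative of `φ` at `m` and `W_k = √(n b) ((2 k - n)/n - m)` for the
standardized magnetization of a configuration with `k` up-spins. The law of `k` is a binomial coefficient times a Gibbs factor, so
the conditional probability is a quotient of two sums over `k` of these weights, restricted to
magnetizations in `A` (`cond_prob_eq`, `cond_prob_ext`). After multiplication by the constant
`exp(n φ(m)) √(2πn) √(1 - m²) / 2`, which cancels in the quotient, Stirling's formula and a third
order Taylor expansion of `φ` at its minimizer `m` show that the weight at `k` is close to
`exp(-W_k²/2)`.

The precise form is `pointwise`: if `|W_k| = x + t` with `t ≥ 0` and `0 ≤ x ≤ n^{1/6}`, the weight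
differs from `exp(-W_k²/2)` by at most `C (1 + x³)/√n · exp(-x²/2) · exp(-(1 + x) t)`. Close to `m`
this comes from the expansion; away from `m` both terms are exponentially small, because `φ` has a
positive gap above `φ(m)` on `A` minus a neighbourhood of `m`: the only other minimizer lies
outside the closure of `A` (`phi_gap`).

The points `W_k` form a lattice of spacing `h = 2√b/√n`. By monotonicity of `exp(-u²/2)` on
`[x, ∞)`, `h` times the sum over `W_k > x` is the Gaussian integral over `(x, ∞)` up to a relative
error of order `(1 + x³)/√n` (`lattice_sum`), where `exp(-x²/2) ≤ e² (1 + x) ∫_x^∞ exp(-u²/2) du`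
turns absolute errors into relative ones. The total mass is the sum of the halves `W_k > 0` and
`W_k ≤ 0`, hence `√(2π)(1 + O(1/√n))`, and dividing gives the estimate for large `n` (`large_n`).
For the remaining finitely many `n` the left side is bounded because `x ≤ n^{1/6}` is (`small_n`).
-/

open MeasureTheory ProbabilityTheory Real Filter

noncomputable section

/-- The spin value `±1` associated with a Boolean. -/
def spin (b : Bool) : ℝ := if b then 1 else -1

/-- Total magnetization `S_n(x) = ∑ i, x_i`. -/
def totalMag (n : ℕ) (x : Fin n → Bool) : ℝ := ∑ i, spin (x i)

/-- Magnetization per particle `m_n(x) = S_n(x)/n`. -/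
def magPP (n : ℕ) (x : Fin n → Bool) : ℝ := totalMag n x / n

/-- Boltzmann–Gibbs weight of a configuration in the cubic Curie–Weiss model
(the reference factor `2^{-n}` is constant and cancels upon normalization). -/
def cubicWeight (n : ℕ) (K J : ℝ) (x : Fin n → Bool) : ℝ :=
  Real.exp (n * (K / 3 * (magPP n x) ^ 3 + J / 2 * (magPP n x) ^ 2))

/-- The cubic Curie–Weiss Boltzmann–Gibbs probability measure `P_{n,K,J}`. -/
def cubicMeasure (n : ℕ) (K J : ℝ) : Measure (Fin n → Bool) :=
  (∑ x : Fin n → Bool, ENNReal.ofReal (cubicWeight n K J x))⁻¹ •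
    ∑ x : Fin n → Bool, ENNReal.ofReal (cubicWeight n K J x) • Measure.dirac x

/-- The probability of an event under `P_{n,K,J}`, as a real number. -/
def cubicProb (n : ℕ) (K J : ℝ) (s : Set (Fin n → Bool)) : ℝ :=
  (cubicMeasure n K J s).toReal

/-- The binary relative entropy `I(m)`. -/
def binEnt (m : ℝ) : ℝ :=
  (1 - m) / 2 * Real.log ((1 - m) / 2) + (1 + m) / 2 * Real.log ((1 + m) / 2)

/-- The function `φ_{K,J}(x) = I(x) − (K/3)x³ − (J/2)x²`. -/
def phiKJ (K J : ℝ) (x : ℝ) : ℝ := binEnt x - K / 3 * x ^ 3 - J / 2 * x ^ 2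

/-- The standard normal cumulative distribution function. -/
def stdNormalCDF (z : ℝ) : ℝ :=
  (ProbabilityTheory.gaussianReal 0 1 (Set.Iic z)).toReal

end

/-! ### The Gaussian tail and lattice sums -/

/-- The unnormalised Gaussian tail `∫_x^∞ exp(-u²/2) du`. -/
noncomputable def gaussTail (x : ℝ) : ℝ := ∫ u in Set.Ioi x, Real.exp (-u ^ 2 / 2)

lemma integrable_gauss : Integrable (fun u : ℝ => Real.exp (-u ^ 2 / 2)) := by
  have := integrable_exp_neg_mul_sq (b := 1 / 2) (by norm_num)
  refine this.congr (ae_of_all _ fun u => ?_)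
  dsimp only
  congr 1
  ring

lemma gaussTail_sub {a b : ℝ} (hab : a ≤ b) :
    gaussTail a - gaussTail b = ∫ u in a..b, Real.exp (-u ^ 2 / 2) := by
  unfold gaussTail
  rw [intervalIntegral.integral_of_le hab, ← Set.Ioc_union_Ioi_eq_Ioi hab,
    setIntegral_union (Set.Ioc_disjoint_Ioi le_rfl) measurableSet_Ioi
      integrable_gauss.integrableOn integrable_gauss.integrableOn]
  ring

lemma gauss_anti {a b : ℝ} (ha : 0 ≤ a) (hab : a ≤ b) :
    Real.exp (-b ^ 2 / 2) ≤ Real.exp (-a ^ 2 / 2) := by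
  apply Real.exp_le_exp.mpr
  nlinarith

lemma gaussTail_sub_le {a b : ℝ} (ha : 0 ≤ a) (hab : a ≤ b) :
    gaussTail a - gaussTail b ≤ (b - a) * Real.exp (-a ^ 2 / 2) := by
  rw [gaussTail_sub hab]
  have h := intervalIntegral.integral_mono_on (μ := volume) hab
    integrable_gauss.intervalIntegrable
    (intervalIntegrable_const (c := Real.exp (-a ^ 2 / 2)))
    (fun u hu => gauss_anti ha hu.1)
  simpa using h

lemma le_gaussTail_sub {a b : ℝ} (ha : 0 ≤ a) (hab : a ≤ b) :
    (b - a) * Real.exp (-b ^ 2 / 2) ≤ gaussTail a - gaussTail b := by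
  rw [gaussTail_sub hab]
  have h := intervalIntegral.integral_mono_on (μ := volume) hab
    (intervalIntegrable_const (c := Real.exp (-b ^ 2 / 2)))
    integrable_gauss.intervalIntegrable
    (fun u hu => gauss_anti (ha.trans hu.1) hu.2)
  simpa using h

lemma gaussTail_nonneg (x : ℝ) : 0 ≤ gaussTail x :=
  integral_nonneg fun _ => (Real.exp_pos _).le

lemma gaussTail_tendsto : Tendsto gaussTail atTop (nhds 0) := by
  have h := intervalIntegral_tendsto_integral_Ioi 0
    (integrable_gauss.integrableOn (s := Set.Ioi 0)) tendsto_id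
  have h2 : Tendsto (fun b : ℝ => gaussTail 0 - ∫ u in (0:ℝ)..b, Real.exp (-u ^ 2 / 2)) atTop
      (nhds (gaussTail 0 - gaussTail 0)) := tendsto_const_nhds.sub h
  rw [sub_self] at h2
  refine h2.congr' ?_
  filter_upwards [eventually_ge_atTop 0] with b hb
  rw [← gaussTail_sub hb]
  ring

/-- A Mills-ratio lower bound, obtained by keeping only the interval `[x, x + 1/(1+x)]`. -/
lemma gauss_le_gaussTail {x : ℝ} (hx : 0 ≤ x) :
    Real.exp (-x ^ 2 / 2) ≤ Real.exp 2 * (1 + x) * gaussTail x := by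
  have h1 := le_gaussTail_sub hx (b := x + 1 / (1 + x)) (by simp; positivity)
  have h2 := gaussTail_nonneg (x + 1 / (1 + x))
  have h3 : Real.exp (-x ^ 2 / 2) ≤ Real.exp 2 * Real.exp (-(x + 1 / (1 + x)) ^ 2 / 2) := by
    rw [← Real.exp_add]
    apply Real.exp_le_exp.mpr
    have e1 : x * (1 / (1 + x)) ≤ 1 := by
      rw [mul_one_div, div_le_one (by positivity)]; linarith
    have e2 : 1 / (1 + x) ≤ 1 := by
      rw [div_le_one (by positivity)]; linarith
    have e3 : 0 ≤ 1 / (1 + x) := by positivity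
    nlinarith
  have h4 : Real.exp (-(x + 1 / (1 + x)) ^ 2 / 2) ≤ (1 + x) * gaussTail x := by
    have : 1 / (1 + x) * Real.exp (-(x + 1 / (1 + x)) ^ 2 / 2) ≤ gaussTail x := by
      have e : x + 1 / (1 + x) - x = 1 / (1 + x) := by ring
      rw [e] at h1
      linarith
    rw [one_div, inv_mul_le_iff₀ (by positivity)] at this
    simpa only [one_div] using this
  calc _ ≤ _ := h3
    _ ≤ Real.exp 2 * ((1 + x) * gaussTail x) := by gcongr
    _ = _ := by ring

lemma gaussTail_pos {x : ℝ} (hx : 0 ≤ x) : 0 < gaussTail x := by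
  have h := gauss_le_gaussTail hx
  have h2 := Real.exp_pos (-x ^ 2 / 2)
  by_contra hc
  have : gaussTail x = 0 := le_antisymm (not_lt.mp hc) (gaussTail_nonneg x)
  rw [this] at h
  linarith

lemma gaussTail_zero : gaussTail 0 = Real.sqrt (2 * π) / 2 := by
  have h := integral_gaussian_Ioi (1 / 2)
  unfold gaussTail
  rw [show (2 * π : ℝ) = π / (1 / 2) by ring, ← h]
  congr 1
  ext u
  congr 1
  ring

lemma gaussianReal_Ioi (x : ℝ) :
    (ProbabilityTheory.gaussianReal 0 1 (Set.Ioi x)).toReal = gaussTail x / Real.sqrt (2 * π) := by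
  rw [gaussianReal_apply_eq_integral 0 one_ne_zero, ENNReal.toReal_ofReal
    (integral_nonneg fun _ => gaussianPDFReal_nonneg _ _ _)]
  unfold gaussTail
  rw [div_eq_inv_mul, ← integral_const_mul]
  congr 1
  ext u
  simp [gaussianPDFReal_def]

/-- Riemann sum of the decreasing function `exp(-u²/2)` along an arithmetic progression that starts
within one step of `x`. -/
lemma gauss_lattice_sum {x h t₀ : ℝ} (hx : 0 ≤ x) (hh : 0 < h) (ht₀ : 0 ≤ t₀) (ht₀h : t₀ ≤ h) :
    Summable (fun j : ℕ => Real.exp (-(x + (t₀ + j * h)) ^ 2 / 2)) ∧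
    |h * ∑' j : ℕ, Real.exp (-(x + (t₀ + j * h)) ^ 2 / 2) - gaussTail x|
      ≤ h * Real.exp (-x ^ 2 / 2) := by
  set w : ℕ → ℝ := fun j => x + (t₀ + j * h) with hw
  have hw0 : ∀ j, 0 ≤ w j := fun j => by simp only [hw]; positivity
  have hws : ∀ j, w (j + 1) - w j = h := fun j => by simp only [hw]; push_cast; ring
  have hwle : ∀ j, w j ≤ w (j + 1) := fun j => by have := hws j; linarith
  set d : ℕ → ℝ := fun j => gaussTail (w j) - gaussTail (w (j + 1)) with hd
  have hd1 : ∀ j, d j ≤ h * Real.exp (-(w j) ^ 2 / 2) := fun j => by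
    have := gaussTail_sub_le (hw0 j) (hwle j); rwa [hws] at this
  have hd2 : ∀ j, h * Real.exp (-(w (j + 1)) ^ 2 / 2) ≤ d j := fun j => by
    have := le_gaussTail_sub (hw0 j) (hwle j); rwa [hws] at this
  have hdnn : ∀ j, 0 ≤ d j := fun j => le_trans (by positivity) (hd2 j)
  have hwt : Tendsto w atTop atTop := by
    have : Tendsto (fun j : ℕ => (j : ℝ) * h) atTop atTop :=
      tendsto_natCast_atTop_atTop.atTop_mul_const hh
    exact tendsto_atTop_add_const_left _ _ (tendsto_atTop_add_const_left _ _ this)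
  have hds : HasSum d (gaussTail (w 0)) := by
    rw [hasSum_iff_tendsto_nat_of_nonneg hdnn]
    have : ∀ N, ∑ i ∈ Finset.range N, d i = gaussTail (w 0) - gaussTail (w N) := fun N => by
      simp only [hd]; exact Finset.sum_range_sub' (fun j => gaussTail (w j)) N
    simp_rw [this]
    simpa using tendsto_const_nhds.sub (gaussTail_tendsto.comp hwt)
  set f : ℕ → ℝ := fun j => h * Real.exp (-(w j) ^ 2 / 2) with hf
  have hfs1 : Summable (fun j => f (j + 1)) :=
    Summable.of_nonneg_of_le (fun j => by positivity) hd2 hds.summable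
  have hfs : Summable f := (summable_nat_add_iff 1).mp hfs1
  have hfs' : Summable (fun j : ℕ => Real.exp (-(w j) ^ 2 / 2)) :=
    (summable_mul_left_iff hh.ne').mp hfs
  refine ⟨hfs', ?_⟩
  rw [← tsum_mul_left]
  change |∑' j, f j - gaussTail x| ≤ _
  have hlow : gaussTail (w 0) ≤ ∑' j, f j := by
    rw [← hds.tsum_eq]; exact hds.summable.tsum_le_tsum hd1 hfs
  have hup : ∑' j, f j ≤ f 0 + gaussTail (w 0) := by
    rw [hfs.tsum_eq_zero_add, ← hds.tsum_eq]
    have := hfs1.tsum_le_tsum hd2 hds.summable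
    linarith
  have hw00 : w 0 = x + t₀ := by simp [hw]
  have hxw : x ≤ w 0 := by rw [hw00]; linarith
  have g1 := gaussTail_sub_le hx hxw
  have g2 := le_gaussTail_sub hx hxw
  have hf0 : f 0 ≤ h * Real.exp (-x ^ 2 / 2) := by
    simp only [hf]; gcongr ?_ * ?_; exact gauss_anti hx hxw
  have e0 := Real.exp_pos (-x ^ 2 / 2)
  have e1 := Real.exp_pos (-(w 0) ^ 2 / 2)
  have e2 : (w 0 - x) * Real.exp (-x ^ 2 / 2) ≤ h * Real.exp (-x ^ 2 / 2) := by
    gcongr; rw [hw00]; linarith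
  have e3 : 0 ≤ (w 0 - x) * Real.exp (-(w 0) ^ 2 / 2) := mul_nonneg (by linarith) e1.le
  rw [abs_le]
  constructor <;> linarith

lemma geom_lattice_sum {x h t₀ : ℝ} (hx : 0 ≤ x) (hh : 0 < h) (ht₀ : 0 ≤ t₀) :
    Summable (fun j : ℕ => Real.exp (-((1 + x) * (t₀ + j * h)))) ∧
    h * ∑' j : ℕ, Real.exp (-((1 + x) * (t₀ + j * h))) ≤ h + 1 / (1 + x) := by
  set q := Real.exp (-((1 + x) * h)) with hq
  have ha : 0 < (1 + x) * h := by positivity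
  have hq0 : 0 ≤ q := (Real.exp_pos _).le
  have hq1 : q < 1 := by rw [hq, Real.exp_lt_one_iff]; linarith
  have hle : ∀ j : ℕ, Real.exp (-((1 + x) * (t₀ + j * h))) ≤ q ^ j := fun j => by
    rw [hq, ← Real.exp_nat_mul]
    apply Real.exp_le_exp.mpr
    nlinarith [mul_nonneg (by linarith : 0 ≤ 1 + x) ht₀]
  have hs : Summable (fun j : ℕ => Real.exp (-((1 + x) * (t₀ + j * h)))) :=
    Summable.of_nonneg_of_le (fun j => (Real.exp_pos _).le) hle
      (summable_geometric_of_lt_one hq0 hq1)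
  refine ⟨hs, ?_⟩
  have h1 : ∑' j : ℕ, Real.exp (-((1 + x) * (t₀ + j * h))) ≤ (1 - q)⁻¹ := by
    rw [← tsum_geometric_of_lt_one hq0 hq1]
    exact hs.tsum_le_tsum hle (summable_geometric_of_lt_one hq0 hq1)
  -- `1 / (1 - e^{-a}) ≤ 1 + 1/a`, i.e. `e^{-a} (1 + a) ≤ 1`.
  have h2 : (1 - q)⁻¹ ≤ 1 + 1 / ((1 + x) * h) := by
    rw [inv_le_iff_one_le_mul₀ (by linarith)]
    have hqa : q * ((1 + x) * h + 1) ≤ 1 := by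
      have := Real.add_one_le_exp ((1 + x) * h)
      calc q * ((1 + x) * h + 1) ≤ q * Real.exp ((1 + x) * h) := by gcongr
        _ = 1 := by rw [hq, ← Real.exp_add]; simp
    have : (1 + 1 / ((1 + x) * h)) * (1 - q)
        = 1 + (1 - q * ((1 + x) * h + 1)) / ((1 + x) * h) := by
      field_simp; ring
    rw [this]
    have : 0 ≤ (1 - q * ((1 + x) * h + 1)) / ((1 + x) * h) := div_nonneg (by linarith) ha.le
    linarith
  calc _ ≤ h * (1 + 1 / ((1 + x) * h)) := by gcongr; exact h1.trans h2
    _ = _ := by field_simp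

/-- Lattice sums of a function `a` that is pointwise close to the Gaussian density (with an error
decaying like `exp(-(1+x) t)` at distance `t` from `x`) approximate the Gaussian tail. -/
lemma lattice_sum {x h t₀ E : ℝ} (hx : 0 ≤ x) (hh : 0 < h) (ht₀ : 0 ≤ t₀) (ht₀h : t₀ ≤ h)
    (hE : 0 ≤ E) (a : ℕ → ℝ)
    (ha : ∀ j : ℕ, |a j - Real.exp (-(x + (t₀ + j * h)) ^ 2 / 2)|
      ≤ E * Real.exp (-x ^ 2 / 2) * Real.exp (-((1 + x) * (t₀ + j * h)))) :
    |h * ∑' j, a j - gaussTail x|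
      ≤ Real.exp 2 * (h * (1 + x) + E * (h * (1 + x) + 1)) * gaussTail x := by
  obtain ⟨s1, b1⟩ := gauss_lattice_sum hx hh ht₀ ht₀h
  obtain ⟨s2, b2⟩ := geom_lattice_sum hx hh ht₀
  have s3 : Summable fun j : ℕ => E * Real.exp (-x ^ 2 / 2) *
      Real.exp (-((1 + x) * (t₀ + j * h))) := s2.mul_left _
  have s4 : Summable fun j : ℕ => a j - Real.exp (-(x + (t₀ + j * h)) ^ 2 / 2) :=
    Summable.of_norm_bounded s3 ha
  have s5 : Summable a := by simpa using s4.add s1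
  have b3 : |∑' j, a j - ∑' j : ℕ, Real.exp (-(x + (t₀ + j * h)) ^ 2 / 2)| ≤
      E * Real.exp (-x ^ 2 / 2) * ∑' j : ℕ, Real.exp (-((1 + x) * (t₀ + j * h))) := by
    rw [← s5.tsum_sub s1, ← tsum_mul_left, ← Real.norm_eq_abs]
    exact tsum_of_norm_bounded s3.hasSum ha
  have b4 : |h * ∑' j, a j - gaussTail x| ≤ h * Real.exp (-x ^ 2 / 2) +
      E * Real.exp (-x ^ 2 / 2) * (h + 1 / (1 + x)) := by
    set T := ∑' j : ℕ, Real.exp (-((1 + x) * (t₀ + j * h)))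
    set G := ∑' j : ℕ, Real.exp (-(x + (t₀ + j * h)) ^ 2 / 2)
    have e : h * ∑' j, a j - gaussTail x = h * (∑' j, a j - G) + (h * G - gaussTail x) := by ring
    rw [e]
    refine (abs_add_le _ _).trans ?_
    rw [abs_mul, abs_of_pos hh]
    have : h * |∑' j, a j - G| ≤ E * Real.exp (-x ^ 2 / 2) * (h * T) := by
      calc _ ≤ h * (E * Real.exp (-x ^ 2 / 2) * T) := by gcongr
        _ = _ := by ring
    have h6 : E * Real.exp (-x ^ 2 / 2) * (h * T) ≤
      E * Real.exp (-x ^ 2 / 2) * (h + 1 / (1 + x)) := by gcongr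
    linarith
  refine b4.trans ?_
  have e : h * Real.exp (-x ^ 2 / 2) + E * Real.exp (-x ^ 2 / 2) * (h + 1 / (1 + x))
      = (h + E * (h + 1 / (1 + x))) * Real.exp (-x ^ 2 / 2) := by ring
  rw [e]
  calc _ ≤ (h + E * (h + 1 / (1 + x))) * (Real.exp 2 * (1 + x) * gaussTail x) := by
        gcongr; exact gauss_le_gaussTail hx
    _ = _ := by field_simp

/-! ### Reduction to a weighted binomial sum -/

lemma cubicWeight_pos (n : ℕ) (K J : ℝ) (x : Fin n → Bool) : 0 < cubicWeight n K J x :=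
  Real.exp_pos _

open Classical in
lemma cubicProb_eq (n : ℕ) (K J : ℝ) (s : Set (Fin n → Bool)) :
    cubicProb n K J s =
      (∑ x, cubicWeight n K J x)⁻¹ * ∑ x, (if x ∈ s then cubicWeight n K J x else 0) := by
  unfold cubicProb cubicMeasure
  rw [Measure.smul_apply, Measure.finsetSum_apply, smul_eq_mul, ENNReal.toReal_mul,
    ENNReal.toReal_inv, ENNReal.toReal_sum (by simp), ENNReal.toReal_sum]
  · congr 2
    · refine Finset.sum_congr rfl fun x _ => ENNReal.toReal_ofReal (cubicWeight_pos n K J x).le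
    · ext x
      rw [Measure.smul_apply, Measure.dirac_apply, smul_eq_mul]
      by_cases hx : x ∈ s
      · simp [hx, (cubicWeight_pos n K J x).le]
      · simp [hx]
  · intro x _
    rw [Measure.smul_apply, Measure.dirac_apply, smul_eq_mul]
    by_cases hx : x ∈ s <;> simp [hx]

open Classical in
lemma cubicProb_div (n : ℕ) (K J : ℝ) (s t : Set (Fin n → Bool)) :
    cubicProb n K J s / cubicProb n K J t =
      (∑ x, (if x ∈ s then cubicWeight n K J x else 0)) /
        ∑ x, (if x ∈ t then cubicWeight n K J x else 0) := by
  rw [cubicProb_eq, cubicProb_eq]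
  have : (∑ x, cubicWeight n K J x)⁻¹ ≠ 0 :=
    inv_ne_zero (Finset.sum_pos (fun x _ => cubicWeight_pos n K J x) Finset.univ_nonempty).ne'
  rw [mul_div_mul_left _ _ this]

/-- The magnetization per particle of a configuration with `k` plus spins among `n`. The number `k`
ranges over `ℤ` so that lattice sums can be indexed beyond `0 ≤ k ≤ n`. -/
noncomputable def latMag (n : ℕ) (k : ℤ) : ℝ := (2 * k - n) / n

lemma totalMag_eq (n : ℕ) (x : Fin n → Bool) :
    totalMag n x = 2 * ((Finset.univ.filter fun i => x i = true).card : ℝ) - n := by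
  have : ∀ i, spin (x i) = 2 * (if x i = true then 1 else 0) - 1 := fun i => by
    unfold spin; split_ifs <;> norm_num
  simp only [totalMag, this, Finset.sum_sub_distrib, ← Finset.mul_sum]
  simp

lemma sum_config (n : ℕ) (F : ℝ → ℝ) :
    ∑ x : Fin n → Bool, F (magPP n x) =
      ∑ k ∈ Finset.range (n + 1), (n.choose k : ℝ) * F (latMag n k) := by
  have h1 : ∀ x : Fin n → Bool, F (magPP n x) =
      F (latMag n ((Finset.univ.filter fun i => x i = true).card : ℕ)) := fun x => by
    simp [magPP, latMag, totalMag_eq]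
  simp_rw [h1]
  have h2 := Finset.sum_powerset_apply_card (fun k : ℕ => F (latMag n k))
    (x := (Finset.univ : Finset (Fin n)))
  simp only [Finset.card_univ, Fintype.card_fin, nsmul_eq_mul] at h2
  rw [← h2]
  refine Finset.sum_bij' (fun x _ => Finset.univ.filter fun i => x i = true)
    (fun s _ => fun i => decide (i ∈ s)) ?_ ?_ ?_ ?_ ?_ <;> simp

open Classical in
/-- The conditional probability as a quotient of binomial sums. -/
lemma cond_prob_eq {n : ℕ} (hn : 1 ≤ n) (K J m b x : ℝ) (hb : 0 < b) (A : Set ℝ) :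
    cubicProb n K J ({y | x < (totalMag n y - n * m) / Real.sqrt (n / b)}
        ∩ {y | magPP n y ∈ A}) / cubicProb n K J {y | magPP n y ∈ A} =
    (∑ k ∈ Finset.range (n + 1), (n.choose k : ℝ) *
      (if x < Real.sqrt (n * b) * (latMag n k - m) ∧ latMag n k ∈ A then
        Real.exp (n * (K / 3 * latMag n k ^ 3 + J / 2 * latMag n k ^ 2)) else 0)) /
    (∑ k ∈ Finset.range (n + 1), (n.choose k : ℝ) *
      (if latMag n k ∈ A then
        Real.exp (n * (K / 3 * latMag n k ^ 3 + J / 2 * latMag n k ^ 2)) else 0)) := by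
  have hn0 : (0 : ℝ) < n := by exact_mod_cast hn
  have hW : ∀ y : Fin n → Bool, (totalMag n y - n * m) / Real.sqrt (n / b) =
      Real.sqrt (n * b) * (magPP n y - m) := fun y => by
    have h1 := Real.sq_sqrt hn0.le
    have hs : 0 < Real.sqrt n := Real.sqrt_pos.mpr hn0
    have hsb : 0 < Real.sqrt b := Real.sqrt_pos.mpr hb
    rw [Real.sqrt_div hn0.le, Real.sqrt_mul hn0.le, magPP]
    field_simp
    rw [h1]
    ring
  rw [cubicProb_div]
  have e1 := sum_config n (fun z => if x < Real.sqrt (n * b) * (z - m) ∧ z ∈ A then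
        Real.exp (n * (K / 3 * z ^ 3 + J / 2 * z ^ 2)) else 0)
  have e2 := sum_config n (fun z => if z ∈ A then
        Real.exp (n * (K / 3 * z ^ 3 + J / 2 * z ^ 2)) else 0)
  rw [← e1, ← e2]
  simp only [Set.mem_inter_iff, Set.mem_ofPred_eq, hW, cubicWeight]

/-! ### Stirling asymptotics of the binomial weights -/

/-- Stirling's formula with a quantitative remainder: the sequence `log σ_n - 1/(12 n)` increases
to `log √π`, while `log σ_n` decreases to it. -/
lemma log_stirling_bound {n : ℕ} (hn : 1 ≤ n) :
    |Real.log (Stirling.stirlingSeq n) - Real.log (Real.sqrt π)| ≤ 1 / (12 * n) := by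
  have hpi : 0 < Real.sqrt π := Real.sqrt_pos.mpr Real.pi_pos
  have hlow : Real.log (Real.sqrt π) ≤ Real.log (Stirling.stirlingSeq n) :=
    Real.log_le_log hpi (Stirling.sqrt_pi_le_stirlingSeq (by omega))
  set f : ℕ → ℝ := fun j => Real.log (Stirling.stirlingSeq (j + 1)) - 1 / (12 * ((j : ℝ) + 1))
  have hmono : Monotone f := by
    refine monotone_nat_of_le_succ fun j => ?_
    have h := Stirling.log_stirlingSeq_sdiff_le (j + 1)
    simp only [f]
    push_cast at h ⊢
    have e : (1 : ℝ) / (12 * ((j : ℝ) + 1) * ((j : ℝ) + 1 + 1)) =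
      1 / (12 * ((j : ℝ) + 1)) - 1 / (12 * ((j : ℝ) + 1 + 1)) := by
        field_simp; ring
    rw [e] at h
    linarith
  have hlim : Tendsto f atTop (nhds (Real.log (Real.sqrt π) - 0)) := by
    refine Tendsto.sub ?_ ?_
    · exact (Stirling.tendsto_stirlingSeq_sqrt_pi.comp (tendsto_add_atTop_nat 1)).log hpi.ne'
    · have h := (tendsto_one_div_add_atTop_nhds_zero_nat (𝕜 := ℝ)).const_mul (1 / 12)
      rw [mul_zero] at h
      refine h.congr fun j => ?_
      field_simp
  have h := hmono.ge_of_tendsto hlim (n - 1)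
  obtain ⟨k, rfl⟩ : ∃ k, n = k + 1 := ⟨n - 1, by omega⟩
  simp only [f, Nat.add_sub_cancel] at h
  push_cast
  rw [abs_le]
  have : (0 : ℝ) ≤ 1 / (12 * ((k : ℝ) + 1)) := by positivity
  constructor <;> linarith

lemma half_one_add_latMag {n : ℕ} (hn : 1 ≤ n) (k : ℤ) : (1 + latMag n k) / 2 = k / n := by
  have hn0 : (0 : ℝ) < n := by exact_mod_cast hn
  unfold latMag; field_simp; ring

lemma half_one_sub_latMag {n : ℕ} (hn : 1 ≤ n) (k : ℤ) : (1 - latMag n k) / 2 = (n - k) / n := by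
  have hn0 : (0 : ℝ) < n := by exact_mod_cast hn
  unfold latMag; field_simp; ring

lemma mul_binEnt_latMag {n k : ℕ} (hk : 0 < k) (hkn : k < n) :
    n * binEnt (latMag n k) =
      (n - k) * Real.log (n - k) + k * Real.log k - n * Real.log n := by
  have hn0 : (0 : ℝ) < n := by exact_mod_cast hk.trans hkn
  have hk0 : (0 : ℝ) < k := by exact_mod_cast hk
  have hnk : (0 : ℝ) < n - k := by rw [sub_pos]; exact_mod_cast hkn
  have h1 := half_one_add_latMag (by omega : 1 ≤ n) k
  have h2 := half_one_sub_latMag (by omega : 1 ≤ n) k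
  rw [binEnt, h1, h2]
  push_cast
  rw [Real.log_div hnk.ne' hn0.ne', Real.log_div hk0.ne' hn0.ne']
  field_simp
  ring

/-- The binomial probability `C(n,k) p^k (1-p)^(n-k)` at `p = k/n` is at most one. -/
lemma choose_le {n k : ℕ} (hk : 0 < k) (hkn : k < n) :
    (n.choose k : ℝ) ≤ Real.exp (-(n * binEnt (latMag n k))) := by
  have hn0 : (0 : ℝ) < n := by exact_mod_cast hk.trans hkn
  have hk0 : (0 : ℝ) < k := by exact_mod_cast hk
  have hnk : (0 : ℝ) < n - k := by rw [sub_pos]; exact_mod_cast hkn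
  have h := add_pow ((k : ℝ) / n) ((n - k) / n) n
  rw [show (k : ℝ) / n + (n - k) / n = 1 by field_simp; ring, one_pow] at h
  have h1 : ((k : ℝ) / n) ^ k * ((n - k) / n) ^ (n - k) * n.choose k ≤ 1 := by
    rw [h]
    refine Finset.single_le_sum (f := fun j => ((k : ℝ) / n) ^ j * ((n - k) / n) ^ (n - j) *
      n.choose j) (fun j _ => by positivity) (Finset.mem_range.mpr (by omega))
  have h2 : Real.exp (n * binEnt (latMag n k)) =
      ((k : ℝ) / n) ^ k * ((n - k) / n) ^ (n - k) := by
    rw [← Real.exp_log (x := ((k : ℝ) / n) ^ k * ((n - k) / n) ^ (n - k)) (by positivity),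
      Real.log_mul (by positivity) (by positivity), Real.log_pow, Real.log_pow,
      mul_binEnt_latMag hk hkn, Real.log_div hnk.ne' hn0.ne', Real.log_div hk0.ne' hn0.ne',
      Nat.cast_sub hkn.le]
    congr 1
    ring
  rw [Real.exp_neg, h2, ← one_div, le_div_iff₀ (by positivity)]
  linarith

lemma log_choose {n k : ℕ} (hk : 0 < k) (hkn : k < n) :
    Real.log (n.choose k) = -(n * binEnt (latMag n k))
      + 1 / 2 * (Real.log n - Real.log 2 - Real.log k - Real.log (n - k))
      + (Real.log (Stirling.stirlingSeq n) - Real.log (Stirling.stirlingSeq k)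
        - Real.log (Stirling.stirlingSeq (n - k))) := by
  have hn0 : (0 : ℝ) < n := by exact_mod_cast hk.trans hkn
  have hk0 : (0 : ℝ) < k := by exact_mod_cast hk
  have hnk : (0 : ℝ) < n - k := by rw [sub_pos]; exact_mod_cast hkn
  rw [mul_binEnt_latMag hk hkn, Stirling.log_stirlingSeq_formula, Stirling.log_stirlingSeq_formula,
    Stirling.log_stirlingSeq_formula, Nat.cast_choose ℝ hkn.le,
    Real.log_div (by positivity) (by positivity), Real.log_mul (by positivity) (by positivity),
    Nat.cast_sub hkn.le, Real.log_mul (by norm_num) hn0.ne', Real.log_mul (by norm_num) hk0.ne',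
    Real.log_mul (by norm_num) hnk.ne', Real.log_div hn0.ne' (Real.exp_pos 1).ne',
    Real.log_div hk0.ne' (Real.exp_pos 1).ne', Real.log_div hnk.ne' (Real.exp_pos 1).ne',
    Real.log_exp]
  ring

/-- The weight `C(n,k) exp(n (K/3 y³ + J/2 y²))` at `y = latMag n k`, rescaled so that it is
asymptotically `exp(-n (φ(y) - φ(m)))` for `y` near `m`. -/
noncomputable def normWeight (K J m : ℝ) (n k : ℕ) : ℝ :=
  (n.choose k : ℝ) * Real.exp (n * (K / 3 * latMag n k ^ 3 + J / 2 * latMag n k ^ 2)) *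
    (Real.exp (n * phiKJ K J m) * (Real.sqrt (2 * π * n) * Real.sqrt (1 - m ^ 2) / 2))

lemma normWeight_nonneg (K J m : ℝ) (n k : ℕ) : 0 ≤ normWeight K J m n k :=
  mul_nonneg (mul_nonneg (Nat.cast_nonneg _) (Real.exp_pos _).le)
    (mul_nonneg (Real.exp_pos _).le
      (div_nonneg (mul_nonneg (Real.sqrt_nonneg _) (Real.sqrt_nonneg _)) (by norm_num)))

lemma normWeight_le {K J m : ℝ} {n k : ℕ} (hk : 0 < k) (hkn : k < n) :
    normWeight K J m n k ≤ 2 * Real.sqrt n *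
      Real.exp (-(n * (phiKJ K J (latMag n k) - phiKJ K J m))) := by
  have h := choose_le hk hkn
  have e : Real.exp (-(n * (phiKJ K J (latMag n k) - phiKJ K J m))) =
      Real.exp (-(n * binEnt (latMag n k))) *
      Real.exp (n * (K / 3 * latMag n k ^ 3 + J / 2 * latMag n k ^ 2)) *
      Real.exp (n * phiKJ K J m) := by
    rw [← Real.exp_add, ← Real.exp_add]
    congr 1
    rw [phiKJ]; ring
  have h2 : Real.sqrt (2 * π * n) * Real.sqrt (1 - m ^ 2) / 2 ≤ 2 * Real.sqrt n := by
    have e1 : Real.sqrt (1 - m ^ 2) ≤ 1 := Real.sqrt_le_one.mpr (by nlinarith [sq_nonneg m])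
    have e2 : Real.sqrt (2 * π) ≤ 4 := by
      rw [Real.sqrt_le_left (by norm_num)]; nlinarith [Real.pi_lt_four]
    rw [Real.sqrt_mul (by positivity)]
    have e3 : 0 ≤ Real.sqrt n := Real.sqrt_nonneg _
    calc _ ≤ 4 * Real.sqrt n * 1 / 2 := by gcongr
      _ = _ := by ring
  rw [e, normWeight]
  calc _ ≤ Real.exp (-(n * binEnt (latMag n k))) *
      Real.exp (n * (K / 3 * latMag n k ^ 3 + J / 2 * latMag n k ^ 2)) *
      (Real.exp (n * phiKJ K J m) * (2 * Real.sqrt n)) := by gcongr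
    _ = _ := by ring

/-- Local limit form of the weights, with the Stirling remainder. -/
lemma normWeight_eq {K J m : ℝ} {n k : ℕ} (hk : 0 < k) (hkn : k < n)
    (hm : m ∈ Set.Ioo (-1 : ℝ) 1) :
    ∃ ρ : ℝ, |ρ| ≤ 1 / (12 * n) + 1 / (12 * k) + 1 / (12 * (n - k)) ∧
      normWeight K J m n k = Real.exp (-(n * (phiKJ K J (latMag n k) - phiKJ K J m))
        + 1 / 2 * (Real.log (1 - m ^ 2) - Real.log (1 - latMag n k ^ 2)) + ρ) := by
  have hn0 : (0 : ℝ) < n := by exact_mod_cast hk.trans hkn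
  have hk0 : (0 : ℝ) < k := by exact_mod_cast hk
  have hnk : (0 : ℝ) < n - k := by rw [sub_pos]; exact_mod_cast hkn
  have hm2 : 0 < 1 - m ^ 2 := by nlinarith [hm.1, hm.2]
  refine ⟨Real.log (Stirling.stirlingSeq n) + Real.log (Real.sqrt π)
    - Real.log (Stirling.stirlingSeq k) - Real.log (Stirling.stirlingSeq (n - k)), ?_, ?_⟩
  · have h1 := log_stirling_bound (n := n) (by omega)
    have h2 := log_stirling_bound (n := k) (by omega)
    have h3 := log_stirling_bound (n := n - k) (by omega)
    rw [Nat.cast_sub hkn.le] at h3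
    rw [abs_le] at *
    constructor <;> linarith [h1.1, h1.2, h2.1, h2.2, h3.1, h3.2]
  · have hc : (0 : ℝ) < n.choose k := by exact_mod_cast Nat.choose_pos hkn.le
    have hpos : 0 < normWeight K J m n k := by
      unfold normWeight
      have := Real.sqrt_pos.mpr hm2
      have := Real.pi_pos
      positivity
    have hy : 1 - latMag n k ^ 2 = 4 * k * (n - k) / n ^ 2 := by
      unfold latMag; push_cast; field_simp; ring
    rw [← Real.exp_log hpos]
    congr 1
    rw [hy, normWeight]
    have hpi := Real.pi_pos
    have hs := Real.sqrt_pos.mpr hm2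
    have hs2 : 0 < Real.sqrt (2 * π * n) := by positivity
    rw [Real.log_mul (by positivity) (by positivity), Real.log_mul hc.ne' (Real.exp_pos _).ne',
      Real.log_mul (Real.exp_pos _).ne' (by positivity), Real.log_exp, Real.log_exp,
      Real.log_div (by positivity) (by norm_num), Real.log_mul hs2.ne' hs.ne',
      Real.log_sqrt (by positivity), Real.log_sqrt hm2.le, Real.log_mul (by positivity) hn0.ne',
      Real.log_mul (by norm_num) hpi.ne', Real.log_sqrt hpi.le,
      Real.log_div (by positivity) (by positivity), Real.log_mul (by positivity) hnk.ne',
      Real.log_mul (by norm_num) hk0.ne', Real.log_pow, log_choose hk hkn,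
      show (4 : ℝ) = 2 ^ 2 by norm_num, Real.log_pow, phiKJ, phiKJ]
    push_cast
    ring

/-! ### Local and global behaviour of `φ` -/

lemma continuous_phiKJ (K J : ℝ) : Continuous (phiKJ K J) := by
  have h1 : Continuous fun m : ℝ => (1 - m) / 2 * Real.log ((1 - m) / 2) :=
    Real.continuous_mul_log.comp (by fun_prop : Continuous fun m : ℝ => (1 - m) / 2)
  have h2 : Continuous fun m : ℝ => (1 + m) / 2 * Real.log ((1 + m) / 2) :=
    Real.continuous_mul_log.comp (by fun_prop : Continuous fun m : ℝ => (1 + m) / 2)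
  unfold phiKJ binEnt
  fun_prop

/-- The first derivative of `φ` on `(-1,1)`. -/
noncomputable def dphi (K J y : ℝ) : ℝ :=
  1 / 2 * (Real.log ((1 + y) / 2) - Real.log ((1 - y) / 2)) - K * y ^ 2 - J * y

/-- The second derivative of `φ` on `(-1,1)`. -/
noncomputable def ddphi (K J y : ℝ) : ℝ := 1 / 2 * (1 / (1 + y) + 1 / (1 - y)) - 2 * K * y - J

lemma hasDerivAt_phiKJ (K J : ℝ) {y : ℝ} (hy : y ∈ Set.Ioo (-1 : ℝ) 1) :
    HasDerivAt (phiKJ K J) (dphi K J y) y := by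
  have h1 : (0 : ℝ) < (1 - y) / 2 := by linarith [hy.2]
  have h2 : (0 : ℝ) < (1 + y) / 2 := by linarith [hy.1]
  have a1 : HasDerivAt (fun y : ℝ => (1 - y) / 2) (-1 / 2) y :=
    ((hasDerivAt_id y).const_sub 1).div_const 2
  have a2 : HasDerivAt (fun y : ℝ => (1 + y) / 2) (1 / 2) y :=
    ((hasDerivAt_id y).const_add 1).div_const 2
  have b1 := (Real.hasDerivAt_mul_log h1.ne').comp y a1
  have b2 := (Real.hasDerivAt_mul_log h2.ne').comp y a2
  have c := (((b1.add b2).sub (((hasDerivAt_id y).pow 3).const_mul (K / 3))).sub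
    (((hasDerivAt_id y).pow 2).const_mul (J / 2)))
  refine c.congr_deriv ?_
  simp only [dphi, id]
  push_cast
  ring

lemma hasDerivAt_dphi (K J : ℝ) {y : ℝ} (hy : y ∈ Set.Ioo (-1 : ℝ) 1) :
    HasDerivAt (dphi K J) (ddphi K J y) y := by
  have h1 : (0 : ℝ) < (1 - y) / 2 := by linarith [hy.2]
  have h2 : (0 : ℝ) < (1 + y) / 2 := by linarith [hy.1]
  have a1 : HasDerivAt (fun y : ℝ => (1 - y) / 2) (-1 / 2) y :=
    ((hasDerivAt_id y).const_sub 1).div_const 2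
  have a2 : HasDerivAt (fun y : ℝ => (1 + y) / 2) (1 / 2) y :=
    ((hasDerivAt_id y).const_add 1).div_const 2
  have c := ((((a2.log h2.ne').sub (a1.log h1.ne')).const_mul (1 / 2)).sub
    (((hasDerivAt_id y).pow 2).const_mul K)).sub ((hasDerivAt_id y).const_mul J)
  refine c.congr_deriv ?_
  simp only [ddphi, id]
  have : 1 - y ≠ 0 := by linarith
  have : 1 + y ≠ 0 := by linarith
  push_cast
  field_simp
  ring

lemma differentiableAt_ddphi (K J : ℝ) {y : ℝ} (hy : y ∈ Set.Ioo (-1 : ℝ) 1) :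
    DifferentiableAt ℝ (ddphi K J) y := by
  have h1 : 1 - y ≠ 0 := by linarith [hy.2]
  have h2 : 1 + y ≠ 0 := by linarith [hy.1]
  unfold ddphi
  fun_prop (disch := assumption)

lemma iteratedDeriv_two_phiKJ (K J : ℝ) {y : ℝ} (hy : y ∈ Set.Ioo (-1 : ℝ) 1) :
    iteratedDeriv 2 (phiKJ K J) y = ddphi K J y := by
  rw [iteratedDeriv_succ, iteratedDeriv_one]
  have : deriv (phiKJ K J) =ᶠ[nhds y] dphi K J := by
    filter_upwards [isOpen_Ioo.mem_nhds hy] with z hz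
    exact (hasDerivAt_phiKJ K J hz).deriv
  rw [this.deriv_eq]
  exact (hasDerivAt_dphi K J hy).deriv

/-- One integration of a local power bound: if `g m = 0` and `|g'(y)| ≤ D |y - m|^p` near `m`, then
`|g(y)| ≤ D |y - m|^(p+1)` there. -/
lemma integrate_bound {g g' : ℝ → ℝ} {m δ D : ℝ} (p : ℕ) (hD : 0 ≤ D)
    (hg : ∀ y, |y - m| ≤ δ → HasDerivAt g (g' y) y)
    (hb : ∀ y, |y - m| ≤ δ → |g' y| ≤ D * |y - m| ^ p) (hm : g m = 0) :
    ∀ y, |y - m| ≤ δ → |g y| ≤ D * |y - m| ^ (p + 1) := by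
  intro y hy
  have hcv : Convex ℝ (Metric.closedBall m |y - m|) := convex_closedBall m _
  have hin : ∀ z ∈ Metric.closedBall m |y - m|, |z - m| ≤ |y - m| := fun z hz => by
    simpa [Real.dist_eq] using hz
  have h := hcv.norm_image_sub_le_of_norm_hasDerivWithin_le (f := g) (f' := g')
    (C := D * |y - m| ^ p) (x := m) (y := y)
    (fun z hz => (hg z ((hin z hz).trans hy)).hasDerivWithinAt)
    (fun z hz => by
      refine (hb z ((hin z hz).trans hy)).trans ?_
      exact mul_le_mul_of_nonneg_left (pow_le_pow_left₀ (abs_nonneg _) (hin z hz) p) hD)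
    (by simp) (by simp [Real.dist_eq])
  rw [hm, sub_zero, Real.norm_eq_abs, Real.norm_eq_abs] at h
  calc _ ≤ _ := h
    _ = _ := by ring

/-- A function differentiable at `m` is Lipschitz at `m`. -/
lemma lipschitz_at {g : ℝ → ℝ} {m : ℝ} (hg : DifferentiableAt ℝ g m) :
    ∃ D > 0, ∃ δ > 0, ∀ y, |y - m| ≤ δ → |g y - g m| ≤ D * |y - m| := by
  obtain ⟨D, hD, h⟩ := hg.hasDerivAt.isBigO_sub.exists_pos
  rw [Asymptotics.IsBigOWith, Metric.eventually_nhds_iff] at h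
  obtain ⟨ε, hε, h⟩ := h
  refine ⟨D, hD, ε / 2, by positivity, fun y hy => ?_⟩
  have := h (y := y) (by rw [Real.dist_eq]; linarith)
  simpa using this

/-- Second-order Taylor expansion at a critical point with cubic error, together with the Lipschitz
bound for the prefactor `log (1 - y²)`. -/
lemma phi_local (K J : ℝ) {m : ℝ} (hm : m ∈ Set.Ioo (-1 : ℝ) 1)
    (hmin : ∀ y ∈ Set.Icc (-1 : ℝ) 1, phiKJ K J m ≤ phiKJ K J y) :
    ∃ D > 0, ∃ δ > 0, ∀ y, |y - m| ≤ δ →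
      y ∈ Set.Ioo (-1 : ℝ) 1 ∧
      |phiKJ K J y - phiKJ K J m - ddphi K J m / 2 * (y - m) ^ 2| ≤ D * |y - m| ^ 3 ∧
      |1 / 2 * (Real.log (1 - m ^ 2) - Real.log (1 - y ^ 2))| ≤ D * |y - m| := by
  have hd0 : dphi K J m = 0 := by
    have hl : IsLocalMin (phiKJ K J) m := by
      filter_upwards [isOpen_Ioo.mem_nhds hm] with z hz
      exact hmin z ⟨hz.1.le, hz.2.le⟩
    exact hl.hasDerivAt_eq_zero (hasDerivAt_phiKJ K J hm)
  obtain ⟨D₁, hD₁, δ₁, hδ₁, h₁⟩ := lipschitz_at (differentiableAt_ddphi K J hm)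
  have hm2 : 1 - m ^ 2 ≠ 0 := by nlinarith [hm.1, hm.2]
  obtain ⟨D₂, hD₂, δ₂, hδ₂, h₂⟩ := lipschitz_at
    (g := fun y => 1 / 2 * (Real.log (1 - m ^ 2) - Real.log (1 - y ^ 2))) (m := m)
    (by fun_prop (disch := assumption))
  obtain ⟨δ₃, hδ₃, h₃⟩ := Metric.isOpen_iff.mp isOpen_Ioo m hm
  set δ := min (min δ₁ δ₂) (δ₃ / 2) with hδ
  have e1 : δ ≤ δ₁ := (min_le_left _ _).trans (min_le_left _ _)
  have e2 : δ ≤ δ₂ := (min_le_left _ _).trans (min_le_right _ _)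
  have e3 : δ ≤ δ₃ / 2 := min_le_right _ _
  have hI : ∀ y, |y - m| ≤ δ → y ∈ Set.Ioo (-1 : ℝ) 1 := fun y hy =>
    h₃ (by rw [Metric.mem_ball, Real.dist_eq]; linarith)
  have hs1 := integrate_bound (g := fun y => dphi K J y - ddphi K J m * (y - m))
    (g' := fun y => ddphi K J y - ddphi K J m) (m := m) (δ := δ) 1 hD₁.le
    (fun y hy => by
      have := (hasDerivAt_dphi K J (hI y hy)).sub
        (((hasDerivAt_id y).sub_const m).const_mul (ddphi K J m))
      refine this.congr_deriv (by simp))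
    (fun y hy => by rw [pow_one]; exact h₁ y (hy.trans e1))
    (by simp [hd0])
  have hs2 := integrate_bound
    (g := fun y => phiKJ K J y - phiKJ K J m - ddphi K J m / 2 * (y - m) ^ 2)
    (g' := fun y => dphi K J y - ddphi K J m * (y - m)) (m := m) (δ := δ) 2 hD₁.le
    (fun y hy => by
      have := ((hasDerivAt_phiKJ K J (hI y hy)).sub_const (phiKJ K J m)).sub
        ((((hasDerivAt_id y).sub_const m).pow 2).const_mul (ddphi K J m / 2))
      refine this.congr_deriv ?_
      simp only [id]
      push_cast
      ring)
    hs1 (by simp)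
  refine ⟨D₁ + D₂, by positivity, δ, by positivity, fun y hy => ⟨hI y hy, ?_, ?_⟩⟩
  · refine (hs2 y hy).trans ?_
    gcongr
    linarith
  · have := h₂ y (hy.trans e2)
    simp only [sub_self, mul_zero, sub_zero] at this
    refine this.trans ?_
    gcongr
    linarith

/-- Away from `m`, the function `φ` stays bounded away from its minimum on `A`. -/
lemma phi_gap (K J : ℝ) {m m' : ℝ} {A : Set ℝ} (hA : A ⊆ Set.Ioo (-1 : ℝ) 1)
    (hmin : ∀ y ∈ Set.Icc (-1 : ℝ) 1, phiKJ K J m ≤ phiKJ K J y)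
    (huniq : ∀ y ∈ Set.Icc (-1 : ℝ) 1, phiKJ K J y = phiKJ K J m → y = m ∨ y = m')
    (hcl : m' ∉ closure A) {δ : ℝ} (hδ : 0 < δ) :
    ∃ ε > 0, ∀ y ∈ A, δ ≤ |y - m| → ε ≤ phiKJ K J y - phiKJ K J m := by
  set S := closure A ∩ {y | δ ≤ |y - m|} with hS
  have hsub : closure A ⊆ Set.Icc (-1 : ℝ) 1 :=
    closure_minimal (hA.trans Set.Ioo_subset_Icc_self) isClosed_Icc
  have hc : IsCompact S := by
    refine (isCompact_Icc.of_isClosed_subset isClosed_closure hsub).inter_right ?_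
    exact isClosed_le continuous_const (by fun_prop)
  rcases S.eq_empty_or_nonempty with h | h
  · refine ⟨1, one_pos, fun y hy hd => ?_⟩
    have : y ∈ S := ⟨subset_closure hy, hd⟩
    rw [h] at this
    exact this.elim
  · obtain ⟨z, hz, hzm⟩ := hc.exists_isMinOn h (continuous_phiKJ K J).continuousOn
    refine ⟨phiKJ K J z - phiKJ K J m, ?_, fun y hy hd => ?_⟩
    · have h1 := hmin z (hsub hz.1)
      have h2 : phiKJ K J z ≠ phiKJ K J m := fun he => by
        rcases huniq z (hsub hz.1) he with rfl | rfl
        · have : δ ≤ |z - z| := hz.2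
          rw [sub_self, abs_zero] at this
          linarith
        · exact hcl hz.1
      exact sub_pos.mpr (lt_of_le_of_ne h1 h2.symm)
    · have := hzm (a := y) ⟨subset_closure hy, hd⟩
      have h3 : phiKJ K J z ≤ phiKJ K J y := this
      linarith

/-! ### Pointwise comparison of the weights with the Gaussian density -/

/-- Comparison where the exponent is controlled: an error `R` of size `D (1 + w³)/s` at `w = x + t`
changes the Gaussian density by a factor that is absorbed by part of `exp(-t²/2)`. -/
lemma inner_bound {D s x t R : ℝ} (hD : 0 ≤ D) (hs : 1 ≤ s) (hx : 0 ≤ x) (ht : 0 ≤ t)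
    (hxs : x ^ 3 ≤ s) (hts : 16 * D * t ≤ s) (hR : |R| ≤ D * (1 + (x + t) ^ 3) / s) :
    |Real.exp (-(x + t) ^ 2 / 2 + R) - Real.exp (-(x + t) ^ 2 / 2)| ≤
      24 * D * Real.exp (5 * D + 4) * (1 + x ^ 3) / s * Real.exp (-x ^ 2 / 2) *
        Real.exp (-((1 + x) * t)) := by
  have hs0 : 0 < s := by linarith
  have hx3 : 0 ≤ x ^ 3 := by positivity
  have ht3 : 0 ≤ t ^ 3 := by positivity
  have hcube : (x + t) ^ 3 ≤ 4 * (x ^ 3 + t ^ 3) := by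
    nlinarith [mul_nonneg (add_nonneg hx ht) (sq_nonneg (x - t))]
  have hR1 : |R| ≤ 4 * D * ((1 + x ^ 3) * (1 + t ^ 3)) / s := by
    refine hR.trans ?_
    rw [div_le_div_iff_of_pos_right hs0]
    have : 1 + (x + t) ^ 3 ≤ 4 * ((1 + x ^ 3) * (1 + t ^ 3)) := by
      nlinarith [mul_nonneg hx3 ht3]
    calc _ ≤ D * (4 * ((1 + x ^ 3) * (1 + t ^ 3))) := by gcongr
      _ = _ := by ring
  have hR2 : |R| ≤ 5 * D + t ^ 2 / 4 := by
    refine hR.trans ?_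
    rw [div_le_iff₀ hs0]
    have h1 : D * (1 + (x + t) ^ 3) ≤ D * (1 + 4 * (x ^ 3 + t ^ 3)) := by gcongr
    have h2 : D * (4 * t ^ 3) ≤ t ^ 2 / 4 * s := by
      nlinarith [mul_le_mul_of_nonneg_left hts (sq_nonneg t)]
    have h3 : D * (1 + 4 * x ^ 3) ≤ 5 * D * s := by
      nlinarith [mul_le_mul_of_nonneg_left hxs hD, mul_le_mul_of_nonneg_left hs hD]
    nlinarith
  have hexp : |Real.exp R - 1| ≤ |R| * Real.exp |R| := by
    rw [abs_le]
    have h1 := Real.add_one_le_exp R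
    have h2 := Real.add_one_le_exp (-R)
    have h3 := Real.one_le_exp (abs_nonneg R)
    have h4 : |R| ≤ |R| * Real.exp |R| := le_mul_of_one_le_right (abs_nonneg R) h3
    refine ⟨by linarith [neg_abs_le R], ?_⟩
    have h5 : Real.exp R - 1 ≤ R * Real.exp R := by
      have : Real.exp R * Real.exp (-R) = 1 := by rw [← Real.exp_add]; simp
      nlinarith [Real.exp_pos R]
    have h6 : R * Real.exp R ≤ |R| * Real.exp |R| := by
      gcongr
      · exact le_abs_self R
      · exact le_abs_self R
    linarith
  have hpoly : 1 + t ^ 3 ≤ 6 * Real.exp t := by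
    have h := Real.pow_div_factorial_le_exp t ht 3
    have h' := Real.sum_le_exp_of_nonneg ht 4
    simp [Finset.sum_range_succ, Nat.factorial] at h'
    nlinarith
  rw [Real.exp_add, ← mul_sub_one, abs_mul, abs_of_pos (Real.exp_pos _)]
  calc Real.exp (-(x + t) ^ 2 / 2) * |Real.exp R - 1|
      ≤ Real.exp (-(x + t) ^ 2 / 2) * ((4 * D * ((1 + x ^ 3) * (6 * Real.exp t)) / s) *
          Real.exp (5 * D + t ^ 2 / 4)) := by
        gcongr
        refine hexp.trans ?_
        gcongr
        refine hR1.trans ?_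
        gcongr
    _ = 24 * D * (1 + x ^ 3) / s * Real.exp (-(x + t) ^ 2 / 2 + t + (5 * D + t ^ 2 / 4)) := by
        rw [Real.exp_add (-(x + t) ^ 2 / 2 + t), Real.exp_add (-(x + t) ^ 2 / 2)]; ring
    _ ≤ 24 * D * (1 + x ^ 3) / s *
          Real.exp ((5 * D + 4) + (-x ^ 2 / 2) + (-((1 + x) * t))) := by
        refine mul_le_mul_of_nonneg_left (Real.exp_le_exp.mpr ?_) (by positivity)
        nlinarith [sq_nonneg (t / 2 - 2)]
    _ = _ := by rw [Real.exp_add, Real.exp_add]; ring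

lemma outer_gauss_bound {κ s x t : ℝ} (hκ : 0 < κ) (hs : 0 < s) (ht : κ * s ≤ t) :
    Real.exp (-(x + t) ^ 2 / 2) ≤
      Real.exp 2 / κ / s * Real.exp (-x ^ 2 / 2) * Real.exp (-((1 + x) * t)) := by
  have ht0 : 0 < t := lt_of_lt_of_le (by positivity) ht
  have h1 : Real.exp (-t) ≤ 1 / (κ * s) := by
    rw [Real.exp_neg, ← one_div]
    apply one_div_le_one_div_of_le (by positivity)
    linarith [Real.add_one_le_exp t]
  calc Real.exp (-(x + t) ^ 2 / 2)
      ≤ Real.exp (2 + -t + (-x ^ 2 / 2) + (-((1 + x) * t))) := by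
        apply Real.exp_le_exp.mpr
        nlinarith [sq_nonneg (t - 2)]
    _ = Real.exp 2 * Real.exp (-t) * Real.exp (-x ^ 2 / 2) * Real.exp (-((1 + x) * t)) := by
        rw [Real.exp_add, Real.exp_add, Real.exp_add]
    _ ≤ Real.exp 2 * (1 / (κ * s)) * Real.exp (-x ^ 2 / 2) * Real.exp (-((1 + x) * t)) := by
        gcongr
    _ = _ := by field_simp

lemma outer_weight_bound {ε θ β s x t : ℝ} (hε : 0 < ε) (hθ1 : θ ≤ 1)
     (hθε : θ * (4 * β + 1) ≤ ε / 2) (hs : 0 < s) (hx : 0 ≤ x) (hxs : x ≤ θ * s)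
    (h1s : 1 ≤ θ * s) (ht : 0 ≤ t) (hts : x + t ≤ 2 * s * β) :
    2 * s * Real.exp (-(s ^ 2 * ε)) ≤
      4 / ε / s * Real.exp (-x ^ 2 / 2) * Real.exp (-((1 + x) * t)) := by
  have hθ0 : 0 < θ := by
    by_contra h
    have := mul_nonpos_of_nonpos_of_nonneg (not_lt.mp h) hs.le
    linarith
  have h1 : x ^ 2 / 2 + (1 + x) * t ≤ s ^ 2 * ε / 2 := by
    have e1 : (1 + x) * t ≤ (2 * (θ * s)) * (2 * s * β) := by
      gcongr <;> linarith
    have e2 : x ^ 2 ≤ (θ * s) ^ 2 := by gcongr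
    have e3 : (θ * s) ^ 2 ≤ θ * s ^ 2 := by
      have : θ ^ 2 ≤ θ := by nlinarith
      calc _ = θ ^ 2 * s ^ 2 := by ring
        _ ≤ _ := by gcongr
    nlinarith [mul_le_mul_of_nonneg_left hθε (sq_nonneg s), mul_nonneg hθ0.le (sq_nonneg s)]
  have h2 : Real.exp (-(s ^ 2 * ε / 2)) ≤ 1 / (s ^ 2 * ε / 2) := by
    rw [Real.exp_neg, ← one_div]
    apply one_div_le_one_div_of_le (by positivity)
    linarith [Real.add_one_le_exp (s ^ 2 * ε / 2)]
  calc 2 * s * Real.exp (-(s ^ 2 * ε))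
      ≤ 2 * s * Real.exp (-(s ^ 2 * ε / 2) + (-x ^ 2 / 2) + (-((1 + x) * t))) := by
        gcongr; linarith
    _ = 2 * s * Real.exp (-(s ^ 2 * ε / 2)) * Real.exp (-x ^ 2 / 2) * Real.exp (-((1 + x) * t)) := by
        rw [Real.exp_add, Real.exp_add]; ring
    _ ≤ 2 * s * (1 / (s ^ 2 * ε / 2)) * Real.exp (-x ^ 2 / 2) * Real.exp (-((1 + x) * t)) := by
        gcongr
    _ = _ := by field_simp; ring_nf

lemma range_x {θ : ℝ} (hθ : 0 < θ) : ∃ N : ℕ, 1 ≤ N ∧ ∀ n : ℕ, N ≤ n →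
    1 ≤ θ * Real.sqrt n ∧ ∀ x : ℝ, x ≤ (n : ℝ) ^ ((1 : ℝ) / 6) → x ≤ θ * Real.sqrt n := by
  have h1 : Tendsto (fun n : ℕ => θ * ((n : ℝ) ^ ((1 : ℝ) / 6)) ^ 2) atTop atTop := by
    refine Tendsto.const_mul_atTop hθ ?_
    refine (tendsto_pow_atTop two_ne_zero).comp ?_
    exact (tendsto_rpow_atTop (by norm_num)).comp tendsto_natCast_atTop_atTop
  obtain ⟨N, hN⟩ := eventually_atTop.mp (h1.eventually_ge_atTop 1)
  refine ⟨max N 1, le_max_right _ _, fun n hn => ?_⟩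
  have h2 := hN n ((le_max_left _ _).trans hn)
  have hn1 : (1 : ℝ) ≤ n := by exact_mod_cast (le_max_right N 1).trans hn
  have h3 : Real.sqrt n = ((n : ℝ) ^ ((1 : ℝ) / 6)) ^ 3 := by
    rw [← Real.rpow_natCast, ← Real.rpow_mul (by positivity), Real.sqrt_eq_rpow]
    norm_num
  set r := (n : ℝ) ^ ((1 : ℝ) / 6) with hr
  have hr1 : 1 ≤ r := Real.one_le_rpow hn1 (by norm_num)
  have h4 : r ≤ θ * r ^ 3 := by nlinarith
  rw [h3]
  exact ⟨by linarith, fun x hx => by linarith⟩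

open Classical in
/-- The rescaled weights restricted to `A`, extended by zero to all integers. -/
noncomputable def extWeight (K J m : ℝ) (A : Set ℝ) (n : ℕ) (k : ℤ) : ℝ :=
  if 0 ≤ k ∧ k ≤ n ∧ latMag n k ∈ A then normWeight K J m n k.toNat else 0

/-- If `k` has magnetization in `(-1,1)` then `0 < k < n`. -/
lemma lat_range {n : ℕ} (hn : 1 ≤ n) {k : ℤ} (hk : latMag n k ∈ Set.Ioo (-1 : ℝ) 1) :
    0 < k ∧ k < n := by
  have hn0 : (0 : ℝ) < n := by exact_mod_cast hn
  have h1 := half_one_add_latMag hn k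
  have h2 := half_one_sub_latMag hn k
  have h3 : (0 : ℝ) < (k : ℝ) / n := by linarith [hk.1]
  have h4 : (0 : ℝ) < ((n : ℝ) - k) / n := by linarith [hk.2]
  rw [div_pos_iff_of_pos_right hn0] at h3 h4
  constructor
  · exact_mod_cast h3
  · have : (k : ℝ) < n := by linarith
    exact_mod_cast this

lemma le_one_add_cube {w : ℝ} (hw : 0 ≤ w) : w ≤ 1 + w ^ 3 := by
  nlinarith [sq_nonneg (w - 1), mul_nonneg hw (sq_nonneg (w - 1))]

set_option maxHeartbeats 1000000 in
/-- The uniform pointwise estimate on which the proof rests: at every lattice point with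
`|W| = x + t` the rescaled weight differs from `exp(-W²/2)` by a relative amount `(1 + x³)/√n`,
with an additional geometric decay in `t`. -/
lemma pointwise (K J : ℝ) {m m' : ℝ} {A : Set ℝ} (hm : m ∈ Set.Ioo (-1 : ℝ) 1)
    (hAo : IsOpen A) (hmA : m ∈ A) (hA : A ⊆ Set.Ioo (-1 : ℝ) 1)
    (hmin : ∀ y ∈ Set.Icc (-1 : ℝ) 1, phiKJ K J m ≤ phiKJ K J y)
    (huniq : ∀ y ∈ Set.Icc (-1 : ℝ) 1, phiKJ K J y = phiKJ K J m → y = m ∨ y = m')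
    (hcl : m' ∉ closure A) (hb : 0 < ddphi K J m) :
    ∃ C > 0, ∃ N : ℕ, 1 ≤ N ∧ ∀ n : ℕ, N ≤ n → ∀ x : ℝ, 0 ≤ x → x ≤ (n : ℝ) ^ ((1 : ℝ) / 6) →
      ∀ (k : ℤ) (t : ℝ), 0 ≤ t → |Real.sqrt (n * ddphi K J m) * (latMag n k - m)| = x + t →
        |extWeight K J m A n k - Real.exp (-(x + t) ^ 2 / 2)| ≤
          C * (1 + x ^ 3) / Real.sqrt n * Real.exp (-x ^ 2 / 2) * Real.exp (-((1 + x) * t)) := by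
  obtain ⟨D, hD, δ, hδ, hloc⟩ := phi_local K J hm hmin
  obtain ⟨δA, hδA, hballA⟩ := Metric.isOpen_iff.mp hAo m hmA
  set b := ddphi K J m with hbdef
  set β := Real.sqrt b with hβdef
  have hβ : 0 < β := Real.sqrt_pos.mpr hb
  have hβb : β ^ 2 = b := Real.sq_sqrt hb.le
  set D' := D / β ^ 3 + D / β + (1 + 1 / δ) with hD'
  have hD'0 : 0 < D' := by positivity
  set δ₀ := min (min (δ / 2) (δA / 2)) (1 / (16 * D' * β)) with hδ₀
  have hδ₀pos : 0 < δ₀ := by positivity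
  have d1 : δ₀ ≤ δ / 2 := (min_le_left _ _).trans (min_le_left _ _)
  have d2 : δ₀ ≤ δA / 2 := (min_le_left _ _).trans (min_le_right _ _)
  have d3 : δ₀ ≤ 1 / (16 * D' * β) := min_le_right _ _
  obtain ⟨ε, hε, hgap⟩ := phi_gap K J hA hmin huniq hcl hδ₀pos
  set θ := min (min 1 (ε / 2 / (4 * β + 1))) (β * δ₀ / 2) with hθ
  have hθ0 : 0 < θ := by positivity
  have t1 : θ ≤ 1 := (min_le_left _ _).trans (min_le_left _ _)
  have t2 : θ * (4 * β + 1) ≤ ε / 2 := by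
    rw [← le_div_iff₀ (by positivity)]
    exact (min_le_left _ _).trans (min_le_right _ _)
  obtain ⟨N, hN1, hN⟩ := range_x hθ0
  set κ := β * δ₀ / 2 with hκ
  have hκ0 : 0 < κ := by positivity
  have t3 : θ ≤ κ := min_le_right _ _
  set C₁ := 24 * D' * Real.exp (5 * D' + 4) with hC₁
  set C₂ := Real.exp 2 / κ with hC₂
  set C₃ := 4 / ε with hC₃
  have hC₁0 : 0 < C₁ := by positivity
  have hC₂0 : 0 < C₂ := by positivity
  have hC₃0 : 0 < C₃ := by positivity
  clear_value C₂ C₃ κ θ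
  clear_value δ₀ D' β b
  clear hθ hδ₀
  refine ⟨C₁ + C₂ + C₃, by positivity, N, hN1, fun n hn x hx hxn k t ht hw => ?_⟩
  obtain ⟨g1, g2⟩ := hN n hn
  have hxs := g2 x hxn
  have hn1 : 1 ≤ n := hN1.trans hn
  have hnR : (1 : ℝ) ≤ n := by exact_mod_cast hn1
  have hx3 : x ^ 3 ≤ Real.sqrt n := by
    have h3 : Real.sqrt n = ((n : ℝ) ^ ((1 : ℝ) / 6)) ^ 3 := by
      rw [← Real.rpow_natCast, ← Real.rpow_mul (by positivity), Real.sqrt_eq_rpow]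
      norm_num
    rw [h3]
    gcongr
  set s := Real.sqrt n with hs
  have hs1 : 1 ≤ s := Real.one_le_sqrt.mpr hnR
  have hs0 : 0 < s := by linarith
  have hs2 : s ^ 2 = n := Real.sq_sqrt (by linarith)
  set y := latMag n k with hy
  clear_value s
  have hw' : s * β * |y - m| = x + t := by
    rw [← hw, abs_mul, Real.sqrt_mul (by linarith), ← hs, ← hβdef, abs_of_pos (mul_pos hs0 hβ)]
  set P := Real.exp (-x ^ 2 / 2) * Real.exp (-((1 + x) * t)) with hP
  have hP0 : 0 < P := by positivity
  have hxc : 1 ≤ 1 + x ^ 3 := by have : 0 ≤ x ^ 3 := by positivity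
                                 linarith
  by_cases hcase : |y - m| ≤ δ₀
  · -- near `m`: Taylor expansion and Stirling
    have hyA : y ∈ A := hballA (by rw [Metric.mem_ball, Real.dist_eq]; linarith)
    obtain ⟨hkpos, hkn⟩ := lat_range hn1 (hA hyA)
    obtain ⟨j, rfl⟩ := Int.eq_ofNat_of_zero_le hkpos.le
    have hj0 : 0 < j := by exact_mod_cast hkpos
    have hjn : j < n := by exact_mod_cast hkn
    have hext : extWeight K J m A n j = normWeight K J m n j := by
      rw [extWeight, if_pos ⟨hkpos.le, hkn.le, hyA⟩, Int.toNat_natCast]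
    obtain ⟨ρ, hρ, heq⟩ := normWeight_eq (K := K) (J := J) hj0 hjn hm
    obtain ⟨-, l1, l2⟩ := hloc y (by linarith)
    have u1 := (hloc (y - δ / 2) (by
      have : y - δ / 2 - m = (y - m) + -(δ / 2) := by ring
      rw [this]; refine (abs_add_le _ _).trans ?_
      rw [abs_neg, abs_of_pos (by positivity : 0 < δ / 2)]; linarith)).1.1
    have u2 := (hloc (y + δ / 2) (by
      have : y + δ / 2 - m = (y - m) + (δ / 2) := by ring
      rw [this]; refine (abs_add_le _ _).trans ?_
      rw [abs_of_pos (by positivity : 0 < δ / 2)]; linarith)).1.2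
    have v1 := half_one_add_latMag hn1 (j : ℤ)
    have v2 := half_one_sub_latMag hn1 (j : ℤ)
    push_cast at v1 v2
    rw [← hy] at v1 v2 heq
    have hn0 : (0 : ℝ) < n := by linarith
    have k1 : δ / 4 * n ≤ j := by rw [← le_div_iff₀ hn0, ← v1]; linarith
    have k2 : δ / 4 * n ≤ n - j := by rw [← le_div_iff₀ hn0, ← v2]; linarith
    have hρ2 : |ρ| ≤ (1 + 1 / δ) / s := by
      have r1 : 1 / (12 * (j : ℝ)) ≤ 1 / (12 * (δ / 4 * n)) := by gcongr
      have r2 : 1 / (12 * ((n : ℝ) - j)) ≤ 1 / (12 * (δ / 4 * n)) := by gcongr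
      have r3 : 1 / (12 * (n : ℝ)) + 1 / (12 * (δ / 4 * n)) + 1 / (12 * (δ / 4 * n)) =
          (1 / 12 + 2 / 3 * (1 / δ)) / n := by field_simp; ring
      have r4 : (1 / 12 + 2 / 3 * (1 / δ)) / n ≤ (1 + 1 / δ) / s := by
        have : 0 < 1 / δ := by positivity
        have hsn : s ≤ n := by rw [← hs2]; nlinarith
        gcongr
        · norm_num
        · linarith
      linarith
    set R := -(n * (phiKJ K J y - phiKJ K J m - b / 2 * (y - m) ^ 2)) +
      1 / 2 * (Real.log (1 - m ^ 2) - Real.log (1 - y ^ 2)) + ρ with hR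
    have hq : (x + t) ^ 2 = n * b * (y - m) ^ 2 := by
      rw [← hw', ← hs2, ← hβb, mul_pow, sq_abs]; ring
    have heq2 : normWeight K J m n j = Real.exp (-(x + t) ^ 2 / 2 + R) := by
      rw [heq]
      congr 1
      rw [hR, neg_div, hq]
      ring
    have hyw : |y - m| = (x + t) / (s * β) := by
      rw [← hw']; field_simp
    have hw0 : 0 ≤ x + t := by positivity
    have hRb : |R| ≤ D' * (1 + (x + t) ^ 3) / s := by
      have q1 : |-(n * (phiKJ K J y - phiKJ K J m - b / 2 * (y - m) ^ 2))| ≤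
          D / β ^ 3 * (1 + (x + t) ^ 3) / s := by
        rw [abs_neg, abs_mul, abs_of_pos hn0]
        calc _ ≤ n * (D * |y - m| ^ 3) := by gcongr
          _ = D / β ^ 3 * (x + t) ^ 3 / s := by
            rw [hyw, ← hs2]; field_simp
          _ ≤ _ := by gcongr; linarith
      have q2 : |1 / 2 * (Real.log (1 - m ^ 2) - Real.log (1 - y ^ 2))| ≤
          D / β * (1 + (x + t) ^ 3) / s := by
        calc _ ≤ _ := l2
          _ = D / β * (x + t) / s := by rw [hyw]; field_simp
          _ ≤ _ := by
            exact div_le_div_of_nonneg_right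
              (mul_le_mul_of_nonneg_left (le_one_add_cube hw0) (by positivity)) hs0.le
      have q3 : |ρ| ≤ (1 + 1 / δ) * (1 + (x + t) ^ 3) / s := by
        refine hρ2.trans ?_
        gcongr
        have : 0 ≤ (x + t) ^ 3 := by positivity
        exact le_mul_of_one_le_right (by positivity) (by linarith)
      have q4 : D' * (1 + (x + t) ^ 3) / s = D / β ^ 3 * (1 + (x + t) ^ 3) / s +
        D / β * (1 + (x + t) ^ 3) / s + (1 + 1 / δ) * (1 + (x + t) ^ 3) / s := by
          rw [hD']; ring
      rw [q4, hR]
      exact (abs_add_le _ _).trans (add_le_add ((abs_add_le _ _).trans (add_le_add q1 q2)) q3)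
    have hts : 16 * D' * t ≤ s := by
      have : t ≤ s * β * (1 / (16 * D' * β)) := by
        calc t ≤ s * β * |y - m| := by rw [hw']; linarith
          _ ≤ s * β * (1 / (16 * D' * β)) := by gcongr; linarith
      calc _ ≤ 16 * D' * (s * β * (1 / (16 * D' * β))) := by gcongr
        _ = s := by field_simp
    have := inner_bound hD'0.le hs1 hx ht hx3 hts hRb
    rw [hext, heq2]
    refine this.trans ?_
    gcongr
    linarith
  · -- away from `m`: both terms are negligible
    push Not at hcase
    have htκ : κ * s ≤ t := by
      have : s * β * δ₀ ≤ x + t := by rw [← hw']; gcongr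
      have : θ * s ≤ κ * s := by gcongr
      have : s * β * δ₀ = 2 * (κ * s) := by rw [hκ]; ring
      linarith
    have hG := outer_gauss_bound (x := x) hκ0 hs0 htκ
    have hWt : |extWeight K J m A n k| ≤ C₃ / s * P := by
      by_cases hin : 0 ≤ k ∧ k ≤ n ∧ latMag n k ∈ A
      · obtain ⟨hkpos, hkn⟩ := lat_range hn1 (hA hin.2.2)
        rw [extWeight, if_pos hin]
        obtain ⟨j, rfl⟩ := Int.eq_ofNat_of_zero_le hkpos.le
        have hj0 : 0 < j := by exact_mod_cast hkpos
        have hjn : j < n := by exact_mod_cast hkn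
        rw [Int.toNat_natCast]
        have hnn : 0 ≤ normWeight K J m n j := normWeight_nonneg K J m n j
        rw [abs_of_nonneg hnn]
        have h1 := normWeight_le (K := K) (J := J) (m := m) hj0 hjn
        have h2 := hgap y hin.2.2 hcase.le
        have hyI := hA hin.2.2
        have h3 : |y - m| ≤ 2 := by
          rw [abs_le]; constructor <;> linarith [hyI.1, hyI.2, hm.1, hm.2]
        have h4 : x + t ≤ 2 * s * β := by
          rw [← hw']; nlinarith [mul_pos hs0 hβ]
        have h5 := outer_weight_bound hε t1 t2 hs0 hx hxs g1 ht h4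
        calc _ ≤ _ := h1
          _ ≤ 2 * s * Real.exp (-(s ^ 2 * ε)) := by
            rw [hs2, ← hs]; gcongr
          _ ≤ _ := h5
          _ = _ := by rw [hP, hC₃]; ring
      · rw [extWeight, if_neg hin, abs_zero]
        positivity
    have hG' : Real.exp (-(x + t) ^ 2 / 2) ≤ C₂ / s * P := by
      calc _ ≤ _ := hG
        _ = _ := by rw [hP, hC₂]; ring
    calc _ ≤ |extWeight K J m A n k| + |Real.exp (-(x + t) ^ 2 / 2)| := abs_sub _ _
      _ ≤ C₃ / s * P + C₂ / s * P := by
        rw [abs_of_pos (Real.exp_pos _)]; gcongr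
      _ = (C₂ + C₃) * 1 / s * P := by ring
      _ ≤ (C₁ + C₂ + C₃) * (1 + x ^ 3) / s * P := by gcongr; linarith
      _ = _ := by rw [hP]; ring

/-! ### Summation over the lattice of magnetizations -/

/-- Sum over the lattice points to the right of `x`. -/
lemma right_lattice {h w₀ x E : ℝ} (hh : 0 < h) (hx : 0 ≤ x) (hE : 0 ≤ E) (f : ℤ → ℝ)
    (hf : ∀ (k : ℤ) (t : ℝ), 0 ≤ t → |h * k + w₀| = x + t →
      |f k - Real.exp (-(x + t) ^ 2 / 2)| ≤
        E * Real.exp (-x ^ 2 / 2) * Real.exp (-((1 + x) * t))) :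
    |h * ∑' k : ℤ, (if x < h * k + w₀ then f k else 0) - gaussTail x| ≤
      Real.exp 2 * (h * (1 + x) + E * (h * (1 + x) + 1)) * gaussTail x := by
  -- `k₀` is the first index with `x < h * k + w₀`
  set k₀ : ℤ := ⌊(x - w₀) / h⌋ + 1 with hk₀
  have h1 : (x - w₀) / h < k₀ := by rw [hk₀]; push_cast; exact Int.lt_floor_add_one _
  have h2 : (k₀ : ℝ) ≤ (x - w₀) / h + 1 := by
    rw [hk₀]; push_cast; linarith [Int.floor_le ((x - w₀) / h)]
  rw [div_lt_iff₀ hh] at h1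
  have h3 : (k₀ : ℝ) * h ≤ x - w₀ + h := by
    have := mul_le_mul_of_nonneg_right h2 hh.le
    rwa [add_mul, div_mul_cancel₀ _ hh.ne', one_mul] at this
  have hinj : Function.Injective (fun j : ℕ => k₀ + (j : ℤ)) := fun a b hab => by
    simpa using hab
  have hsum : ∑' k : ℤ, (if x < h * k + w₀ then f k else 0) = ∑' j : ℕ, f (k₀ + j) := by
    rw [← hinj.tsum_eq]
    · refine tsum_congr fun j => ?_
      rw [if_pos]
      push_cast
      have : 0 ≤ h * (j : ℝ) := by positivity
      nlinarith
    · intro k hk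
      have hk' : x < h * k + w₀ := by
        by_contra hcon
        exact hk (if_neg hcon)
      have : (x - w₀) / h < k := by rw [div_lt_iff₀ hh]; linarith
      have h5 : k₀ ≤ k := by
        rw [hk₀]; exact Int.add_one_le_iff.mpr (Int.floor_lt.mpr this)
      exact ⟨(k - k₀).toNat, by simp [Int.toNat_of_nonneg (sub_nonneg.mpr h5)]⟩
  rw [hsum]
  refine lattice_sum (t₀ := h * k₀ + w₀ - x) hx hh (by linarith) (by linarith) hE _ fun j => ?_
  have hj : 0 ≤ (j : ℝ) * h := by positivity
  refine hf _ _ (by linarith) ?_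
  push_cast
  rw [abs_of_nonneg] <;> nlinarith

/-- Sum over the lattice points in `(-∞, 0]`. -/
lemma left_lattice {h w₀ E : ℝ} (hh : 0 < h) (hE : 0 ≤ E) (f : ℤ → ℝ)
    (hf : ∀ (k : ℤ) (t : ℝ), 0 ≤ t → |h * k + w₀| = 0 + t →
      |f k - Real.exp (-(0 + t) ^ 2 / 2)| ≤
        E * Real.exp (-0 ^ 2 / 2) * Real.exp (-((1 + 0) * t))) :
    |h * ∑' k : ℤ, (if 0 < h * k + w₀ then 0 else f k) - gaussTail 0| ≤
      Real.exp 2 * (h * (1 + 0) + E * (h * (1 + 0) + 1)) * gaussTail 0 := by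
  -- `k₁` is the last index with `h * k + w₀ ≤ 0`
  set k₁ : ℤ := ⌊(-w₀) / h⌋ with hk₁
  have h1 : (k₁ : ℝ) ≤ (-w₀) / h := Int.floor_le _
  have h2 : (-w₀) / h < (k₁ : ℝ) + 1 := Int.lt_floor_add_one _
  rw [div_lt_iff₀ hh] at h2
  rw [le_div_iff₀ hh] at h1
  have hinj : Function.Injective (fun j : ℕ => k₁ - (j : ℤ)) := fun a b hab => by
    simpa using hab
  have hsum : ∑' k : ℤ, (if 0 < h * k + w₀ then 0 else f k) = ∑' j : ℕ, f (k₁ - j) := by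
    rw [← hinj.tsum_eq]
    · refine tsum_congr fun j => ?_
      rw [if_neg]
      push_cast
      have : 0 ≤ h * (j : ℝ) := by positivity
      nlinarith
    · intro k hk
      have hk' : ¬ 0 < h * k + w₀ := by
        intro hcon
        exact hk (if_pos hcon)
      have : (k : ℝ) ≤ (-w₀) / h := by rw [le_div_iff₀ hh]; linarith
      have h5 : k ≤ k₁ := Int.le_floor.mpr this
      exact ⟨(k₁ - k).toNat, by simp [Int.toNat_of_nonneg (sub_nonneg.mpr h5)]⟩
  rw [hsum]
  refine lattice_sum (t₀ := -(h * k₁ + w₀)) le_rfl hh (by linarith) (by linarith) hE _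
    fun j => ?_
  have hj : 0 ≤ (j : ℝ) * h := by positivity
  refine hf _ _ (by linarith) ?_
  push_cast
  rw [abs_of_nonpos] <;> nlinarith

open Classical in
lemma extWeight_natCast (K J m : ℝ) (A : Set ℝ) {n k : ℕ} (hk : k ∈ Finset.range (n + 1)) :
    extWeight K J m A n k = (n.choose k : ℝ) * (if latMag n k ∈ A then
        Real.exp (n * (K / 3 * latMag n k ^ 3 + J / 2 * latMag n k ^ 2)) else 0) *
      (Real.exp (n * phiKJ K J m) * (Real.sqrt (2 * π * n) * Real.sqrt (1 - m ^ 2) / 2)) := by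
  have hk' : k ≤ n := by simpa [Nat.lt_succ_iff] using hk
  by_cases h : latMag n k ∈ A
  · rw [extWeight, if_pos ⟨by positivity, by exact_mod_cast hk', h⟩, if_pos h, normWeight,
      Int.toNat_natCast]
  · rw [extWeight, if_neg (fun hc => h hc.2.2), if_neg h]; ring

/-- A function on `ℤ` that vanishes with `extWeight` has its sum carried by `{0, …, n}`. -/
lemma tsum_ext (K J m : ℝ) (A : Set ℝ) (n : ℕ) (g : ℤ → ℝ)
    (hg : ∀ k, extWeight K J m A n k = 0 → g k = 0) :
    ∑' k : ℤ, g k = ∑ k ∈ Finset.range (n + 1), g (k : ℕ) := by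
  classical
  have h0 : ∀ k : ℤ, ¬ (0 ≤ k ∧ k ≤ n) → g k = 0 := fun k hk => by
    refine hg k ?_
    rw [extWeight, if_neg]
    exact fun hc => hk ⟨hc.1, hc.2.1⟩
  have hinj : Function.Injective (fun j : ℕ => (j : ℤ)) := Nat.cast_injective
  rw [← hinj.tsum_eq, tsum_eq_sum]
  · intro j hj
    refine h0 _ fun hc => hj ?_
    simp only [Finset.mem_range]
    have : j ≤ n := by exact_mod_cast hc.2
    omega
  · intro k hk
    by_cases hk0 : 0 ≤ k
    · exact ⟨k.toNat, by simp [hk0]⟩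
    · exact absurd (h0 k fun hc => hk0 hc.1) hk

lemma support_tsum_summable (K J m : ℝ) (A : Set ℝ) (n : ℕ) (g : ℤ → ℝ)
    (hg : ∀ k, extWeight K J m A n k = 0 → g k = 0) : Summable g := by
  classical
  refine summable_of_ne_finset_zero (s := Finset.Icc (0 : ℤ) n) fun k hk => hg k ?_
  rw [extWeight, if_neg]
  exact fun hc => hk (Finset.mem_Icc.mpr ⟨hc.1, hc.2.1⟩)

/-- The conditional probability as a quotient of sums of the rescaled weights. -/
lemma cond_prob_ext {n : ℕ} (hn : 1 ≤ n) (K J x : ℝ) {m b : ℝ} (hm : m ∈ Set.Ioo (-1 : ℝ) 1)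
    (hb : 0 < b) (A : Set ℝ) :
    cubicProb n K J ({y | x < (totalMag n y - n * m) / Real.sqrt (n / b)}
        ∩ {y | magPP n y ∈ A}) / cubicProb n K J {y | magPP n y ∈ A} =
    (∑' k : ℤ, (if x < Real.sqrt (n * b) * (latMag n k - m) then extWeight K J m A n k else 0)) /
      ∑' k : ℤ, extWeight K J m A n k := by
  classical
  have hn0 : (0 : ℝ) < n := by exact_mod_cast hn
  have hc : (Real.exp (n * phiKJ K J m) *
      (Real.sqrt (2 * π * n) * Real.sqrt (1 - m ^ 2) / 2)) ≠ 0 := by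
    have : 0 < 1 - m ^ 2 := by nlinarith [hm.1, hm.2]
    positivity
  rw [cond_prob_eq hn K J m b x hb A, tsum_ext K J m A n _ (fun k hk => by simp [hk]),
    tsum_ext K J m A n _ (fun k hk => hk), ← mul_div_mul_right _ _ hc, Finset.sum_mul,
    Finset.sum_mul]
  congr 1
  · refine Finset.sum_congr rfl fun k hk => ?_
    rw [extWeight_natCast K J m A hk]
    by_cases h1 : x < Real.sqrt (n * b) * (latMag n k - m) <;> by_cases h2 : latMag n k ∈ A <;>
      simp [h1, h2]
  · refine Finset.sum_congr rfl fun k hk => ?_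
    rw [extWeight_natCast K J m A hk]

lemma ratio_bound {T S G R α β : ℝ} (hG : 0 < G) (hR : 0 < R) (hT : |T - G| ≤ α * G)
    (hS : |S - R| ≤ β * R) (hβ : β ≤ 1 / 2) : |T / S / (G / R) - 1| ≤ 2 * (α + β) := by
  have hSlow : R / 2 ≤ S := by nlinarith [(abs_le.mp hS).1]
  have hS0 : 0 < S := by linarith
  have h1 : T / S / (G / R) - 1 = ((T - G) / G + (R - S) / R) * (R / S) := by
    field_simp; ring
  have h2 : |(T - G) / G| ≤ α := by
    rw [abs_div, abs_of_pos hG, div_le_iff₀ hG]; exact hT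
  have h3 : |(R - S) / R| ≤ β := by
    rw [abs_div, abs_of_pos hR, div_le_iff₀ hR, abs_sub_comm]; exact hS
  have h4 : |R / S| ≤ 2 := by
    rw [abs_of_pos (by positivity), div_le_iff₀ hS0]; linarith
  rw [h1, abs_mul]
  calc _ ≤ (α + β) * 2 := by
        refine mul_le_mul ((abs_add_le _ _).trans (by linarith)) h4 (abs_nonneg _) ?_
        linarith [(abs_nonneg _).trans h2, (abs_nonneg _).trans h3]
    _ = _ := by ring

/-- The moderate deviation estimate for all sufficiently large `n`. -/
lemma large_n (K J : ℝ) {m m' : ℝ} {A : Set ℝ} (hm : m ∈ Set.Ioo (-1 : ℝ) 1)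
    (hAo : IsOpen A) (hmA : m ∈ A) (hA : A ⊆ Set.Ioo (-1 : ℝ) 1)
    (hmin : ∀ y ∈ Set.Icc (-1 : ℝ) 1, phiKJ K J m ≤ phiKJ K J y)
    (huniq : ∀ y ∈ Set.Icc (-1 : ℝ) 1, phiKJ K J y = phiKJ K J m → y = m ∨ y = m')
    (hcl : m' ∉ closure A) (hb : 0 < ddphi K J m) :
    ∃ C > 0, ∃ N : ℕ, 1 ≤ N ∧ ∀ n : ℕ, N ≤ n → ∀ x : ℝ, 0 ≤ x → x ≤ (n : ℝ) ^ ((1 : ℝ) / 6) →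
      |(cubicProb n K J ({y | x < (totalMag n y - n * m) / Real.sqrt (n / ddphi K J m)}
        ∩ {y | magPP n y ∈ A}) / cubicProb n K J {y | magPP n y ∈ A}) /
          (gaussianReal 0 1 (Set.Ioi x)).toReal - 1| ≤ C * (1 + x ^ 3) / Real.sqrt n := by
  obtain ⟨C, hC, N, hN, hpt⟩ := pointwise K J hm hAo hmA hA hmin huniq hcl hb
  set b := ddphi K J m with hbdef
  set β := Real.sqrt b with hβdef
  have hβ : 0 < β := Real.sqrt_pos.mpr hb
  set D := Real.exp 2 * (4 * β + C * (4 * β + 1)) with hD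
  have hD0 : 0 < D := by positivity
  obtain ⟨M, hM⟩ := exists_nat_ge ((2 * D) ^ 2)
  refine ⟨4 * D, by positivity, max N M, le_max_of_le_left hN, fun n hn x hx hxn => ?_⟩
  have hnN : N ≤ n := (le_max_left _ _).trans hn
  have hnM : M ≤ n := (le_max_right _ _).trans hn
  have hn1 : 1 ≤ n := hN.trans hnN
  have hn1' : (1 : ℝ) ≤ n := by exact_mod_cast hn1
  have hn0 : (0 : ℝ) < n := by linarith
  set s := Real.sqrt n with hs
  have hs1 : 1 ≤ s := Real.one_le_sqrt.mpr hn1'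
  have hs0 : 0 < s := by linarith
  have hs2 : s ^ 2 = n := Real.sq_sqrt hn0.le
  have hDs : D / s ≤ 1 / 2 := by
    have : 2 * D ≤ s := by
      refine Real.le_sqrt_of_sq_le (hM.trans ?_)
      exact_mod_cast hnM
    rw [div_le_iff₀ hs0]; linarith
  have hxs : ∀ x : ℝ, x ≤ (n : ℝ) ^ ((1 : ℝ) / 6) → x ≤ s := fun x hx => by
    refine hx.trans ?_
    rw [hs, Real.sqrt_eq_rpow]
    exact Real.rpow_le_rpow_of_exponent_le hn1' (by norm_num)
  set h := 2 * β / s with hh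
  have hh0 : 0 < h := by positivity
  set w₀ := -(s * β * (1 + m)) with hw₀
  have hW : ∀ k : ℤ, Real.sqrt (n * b) * (latMag n k - m) = h * k + w₀ := fun k => by
    rw [Real.sqrt_mul hn0.le, ← hs, ← hβdef, latMag, hw₀, hh, ← hs2]
    field_simp
    ring
  have hbd : ∀ x : ℝ, 0 ≤ x → x ≤ (n : ℝ) ^ ((1 : ℝ) / 6) →
      Real.exp 2 * (h * (1 + x) + C * (1 + x ^ 3) / s * (h * (1 + x) + 1)) ≤
        D * (1 + x ^ 3) / s := fun x hx hxn => by
    have hx3 : 0 ≤ x ^ 3 := by positivity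
    have e1 : h * (1 + x) ≤ 4 * β * (1 + x ^ 3) / s := by
      rw [hh, div_mul_eq_mul_div]
      gcongr ?_ / s
      nlinarith [le_one_add_cube hx]
    have e2 : h * (1 + x) ≤ 4 * β := by
      rw [hh, div_mul_eq_mul_div, div_le_iff₀ hs0]
      nlinarith [hxs x hxn]
    calc _ ≤ Real.exp 2 * (4 * β * (1 + x ^ 3) / s +
          C * (1 + x ^ 3) / s * (4 * β + 1)) := by gcongr
      _ = _ := by rw [hD]; ring
  have hpt' : ∀ x : ℝ, 0 ≤ x → x ≤ (n : ℝ) ^ ((1 : ℝ) / 6) → ∀ (k : ℤ) (t : ℝ), 0 ≤ t →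
      |h * k + w₀| = x + t → |extWeight K J m A n k - Real.exp (-(x + t) ^ 2 / 2)| ≤
          C * (1 + x ^ 3) / s * Real.exp (-x ^ 2 / 2) * Real.exp (-((1 + x) * t)) :=
    fun x hx hxn k t ht hk => hpt n hnN x hx hxn k t ht (by rw [hW, hk])
  have hr0 : (0 : ℝ) ≤ (n : ℝ) ^ ((1 : ℝ) / 6) := by positivity
  have hT : ∀ x : ℝ, 0 ≤ x → x ≤ (n : ℝ) ^ ((1 : ℝ) / 6) →
      |h * ∑' k : ℤ, (if x < h * k + w₀ then extWeight K J m A n k else 0) - gaussTail x| ≤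
        D * (1 + x ^ 3) / s * gaussTail x := fun x hx hxn =>
    (right_lattice hh0 hx (by positivity) _ (hpt' x hx hxn)).trans
      (mul_le_mul_of_nonneg_right (hbd x hx hxn) (gaussTail_nonneg x))
  have hL := (left_lattice hh0 (by positivity) _ (hpt' 0 le_rfl hr0)).trans
      (mul_le_mul_of_nonneg_right (hbd 0 le_rfl hr0) (gaussTail_nonneg 0))
  have hR := hT 0 le_rfl hr0
  have hsplit : ∑' k : ℤ, extWeight K J m A n k =
      ∑' k : ℤ, (if 0 < h * k + w₀ then extWeight K J m A n k else 0) +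
        ∑' k : ℤ, (if 0 < h * k + w₀ then 0 else extWeight K J m A n k) := by
    rw [← (support_tsum_summable K J m A n _ fun k hk => by simp [hk]).tsum_add
      (support_tsum_summable K J m A n _ fun k hk => by simp [hk])]
    refine tsum_congr fun k => ?_
    split_ifs <;> simp
  have hpi : 0 < Real.sqrt (2 * π) := by positivity
  have hS : |h * ∑' k : ℤ, extWeight K J m A n k - Real.sqrt (2 * π)| ≤
      D / s * Real.sqrt (2 * π) := by
    rw [gaussTail_zero] at hL hR
    have e0 : D * (1 + 0 ^ 3) / s = D / s := by norm_num
    rw [e0] at hL hR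
    rw [hsplit, mul_add]
    rw [abs_le] at hL hR ⊢
    constructor <;> linarith [hL.1, hL.2, hR.1, hR.2]
  rw [cond_prob_ext hn1 K J x hm hb A, gaussianReal_Ioi]
  simp only [hW]
  rw [← mul_div_mul_left (∑' k : ℤ, (if x < h * k + w₀ then extWeight K J m A n k else 0)) _
    hh0.ne']
  refine (ratio_bound (gaussTail_pos hx) hpi (hT x hx hxn) hS hDs).trans ?_
  have hx3 : 0 ≤ x ^ 3 := by positivity
  have : D / s ≤ D * (1 + x ^ 3) / s := by
    gcongr ?_ / s
    nlinarith
  calc _ ≤ 2 * (D * (1 + x ^ 3) / s + D * (1 + x ^ 3) / s) := by gcongr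
    _ = _ := by ring

/-! ### Small `n` and conclusion -/

lemma cond_ratio_mem (n : ℕ) (K J : ℝ) (s t : Set (Fin n → Bool)) :
    0 ≤ cubicProb n K J (s ∩ t) / cubicProb n K J t ∧
      cubicProb n K J (s ∩ t) / cubicProb n K J t ≤ 1 := by
  classical
  have h0 : ∀ x, 0 ≤ cubicWeight n K J x := fun x => (cubicWeight_pos n K J x).le
  rw [cubicProb_div]
  have hden : 0 ≤ ∑ x, (if x ∈ t then cubicWeight n K J x else 0) :=
    Finset.sum_nonneg fun x _ => by split_ifs <;> simp [h0]
  refine ⟨div_nonneg (Finset.sum_nonneg fun x _ => by split_ifs <;> simp [h0]) hden,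
    div_le_one_of_le₀ (Finset.sum_le_sum fun x _ => ?_) hden⟩
  by_cases hs : x ∈ s <;> by_cases ht : x ∈ t <;> simp [hs, ht, h0]

/-- For bounded `n` the estimate is trivial, since the Gaussian tail is bounded below. -/
lemma small_n (N : ℕ) : ∃ C > 0, ∀ n : ℕ, 1 ≤ n → n ≤ N → ∀ x r : ℝ, 0 ≤ x →
    x ≤ (n : ℝ) ^ ((1 : ℝ) / 6) → 0 ≤ r → r ≤ 1 →
      |r / (gaussianReal 0 1 (Set.Ioi x)).toReal - 1| ≤ C * (1 + x ^ 3) / Real.sqrt n := by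
  set X := (N : ℝ) ^ ((1 : ℝ) / 6) with hX
  have hX0 : 0 ≤ X := by positivity
  set q := (gaussianReal 0 1 (Set.Ioi X)).toReal with hq
  have hq0 : 0 < q := by
    rw [hq, gaussianReal_Ioi]
    have := gaussTail_pos hX0
    positivity
  refine ⟨Real.sqrt N * (1 / q + 1) + 1, by positivity, fun n hn hnN x r hx hxn hr0 hr1 => ?_⟩
  have hn0 : (0 : ℝ) < n := by exact_mod_cast hn
  have hnN' : (n : ℝ) ≤ N := by exact_mod_cast hnN
  have hxX : x ≤ X := hxn.trans (Real.rpow_le_rpow hn0.le hnN' (by norm_num))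
  have hmono : q ≤ (gaussianReal 0 1 (Set.Ioi x)).toReal :=
    ENNReal.toReal_mono (measure_ne_top _ _) (measure_mono (Set.Ioi_subset_Ioi hxX))
  have hs0 : 0 < Real.sqrt n := Real.sqrt_pos.mpr hn0
  have h1 : r / (gaussianReal 0 1 (Set.Ioi x)).toReal ≤ 1 / q := by gcongr
  have h2 : 0 ≤ r / (gaussianReal 0 1 (Set.Ioi x)).toReal := div_nonneg hr0 (by linarith)
  have h3 : 0 < 1 / q := by positivity
  have hx3 : 0 ≤ x ^ 3 := by positivity
  have h4 : Real.sqrt n ≤ Real.sqrt N := Real.sqrt_le_sqrt hnN'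
  rw [le_div_iff₀ hs0]
  calc _ ≤ (1 / q + 1) * Real.sqrt N := by
        refine mul_le_mul ?_ h4 hs0.le (by positivity)
        rw [abs_le]; constructor <;> linarith
    _ ≤ (Real.sqrt N * (1 / q + 1) + 1) * 1 := by linarith
    _ ≤ _ := by
        refine mul_le_mul_of_nonneg_left (by linarith) (by positivity)

/-- Conditional Cramér-type moderate deviations on the coexistence curve: when
`φ_{K,J}` has exactly two nondegenerate minimizers `m 0 ≠ m 1` in `(−1,1)` and
`A i` is an open neighborhood of `m i` in `(−1,1)` whose closure misses the other
phase, then for each `i` there are `c_i, C_i > 0` such that for all `n ≥ 1` and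
`0 ≤ x ≤ c_i n^{1/6}`,
`|P_{n,K,J}(W_n^{(i)} > x | m_n ∈ A_i)/P(Z > x) − 1| ≤ C_i (1+x³)/√n`. -/
theorem stmt_18 (K J : ℝ) (hK : 0 < K) (m : Fin 2 → ℝ)
    (hne : m 0 ≠ m 1)
    (hmem : ∀ i, m i ∈ Set.Ioo (-1 : ℝ) 1)
    (hmin : ∀ i, ∀ y ∈ Set.Icc (-1 : ℝ) 1, phiKJ K J (m i) ≤ phiKJ K J y)
    (huniq : ∀ y ∈ Set.Icc (-1 : ℝ) 1,
      phiKJ K J y = phiKJ K J (m 0) → (y = m 0 ∨ y = m 1))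
    (hconv : ∀ i, 0 < iteratedDeriv 2 (phiKJ K J) (m i))
    (A : Fin 2 → Set ℝ)
    (hAopen : ∀ i, IsOpen (A i)) (hAmem : ∀ i, m i ∈ A i)
    (hAsub : ∀ i, A i ⊆ Set.Ioo (-1 : ℝ) 1)
    (hAcl : ∀ i, m (1 - i) ∉ closure (A i)) :
    ∀ i : Fin 2, ∃ c C : ℝ, 0 < c ∧ 0 < C ∧ ∀ n : ℕ, 1 ≤ n → ∀ x : ℝ,
      0 ≤ x → x ≤ c * (n : ℝ) ^ ((1 : ℝ)/6) →
      |(cubicProb n K J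
            ({y | x < (totalMag n y - n * m i) /
                Real.sqrt (n / iteratedDeriv 2 (phiKJ K J) (m i))}
              ∩ {y | magPP n y ∈ A i}) /
          cubicProb n K J {y | magPP n y ∈ A i}) /
          (ProbabilityTheory.gaussianReal 0 1 (Set.Ioi x)).toReal
        - 1| ≤ C * (1 + x ^ 3) / Real.sqrt n := by
  intro i
  have hdd := iteratedDeriv_two_phiKJ K J (hmem i)
  have hb : 0 < ddphi K J (m i) := hdd ▸ hconv i
  have hIcc : ∀ i, m i ∈ Set.Icc (-1 : ℝ) 1 := fun i => Set.Ioo_subset_Icc_self (hmem i)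
  have heq : phiKJ K J (m i) = phiKJ K J (m 0) :=
    le_antisymm (hmin i _ (hIcc 0)) (hmin 0 _ (hIcc i))
  have huniq' : ∀ y ∈ Set.Icc (-1 : ℝ) 1, phiKJ K J y = phiKJ K J (m i) →
      y = m i ∨ y = m (1 - i) := by
    intro y hy hyeq
    have h := huniq y hy (hyeq.trans heq)
    fin_cases i
    · simpa using h
    · simpa using h.symm
  obtain ⟨C₁, hC₁, N, hN, hlarge⟩ := large_n K J (hmem i) (hAopen i) (hAmem i) (hAsub i)
    (hmin i) huniq' (hAcl i) hb
  obtain ⟨C₂, hC₂, hsmall⟩ := small_n N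
  refine ⟨1, C₁ + C₂, one_pos, by positivity, fun n hn x hx hxn => ?_⟩
  rw [one_mul] at hxn
  rw [hdd]
  rcases le_total N n with h | h
  · refine (hlarge n h x hx hxn).trans ?_
    gcongr
    linarith
  · have hr := cond_ratio_mem n K J
      {y | x < (totalMag n y - n * m i) / Real.sqrt (n / ddphi K J (m i))} {y | magPP n y ∈ A i}
    refine (hsmall n hn h x _ hx hxn hr.1 hr.2).trans ?_
    gcongr
    linarith
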